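/- Let k be an algebraically closed field of characteristic p and fix g ≥ 1. The number of isomorphism classes of quadruples (M, F, V, ⟨·,·⟩) with dim_k M = 2g — where isomorphisms are k-linear bijections commuting with F and V and taking one alternating form to the other — is exactly 2^g. -/

import Mathlib

open Module

instance frobenius_surjective_inst (p : ℕ) [Fact p.Prime] (k : Type*) [Field k] [CharP k p]
    [PerfectRing k p] : RingHomSurjective (frobenius k p) :=
  ⟨(frobeniusEquiv k p).surjective⟩

instance frobeniusEquiv_symm_surjective_inst (p : ℕ) [Fact p.Prime] (k : Type*) [Field k]
    [CharP k p] [PerfectRing k p] :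
    RingHomSurjective ((frobeniusEquiv k p).symm : k →+* k) :=
  ⟨(frobeniusEquiv k p).symm.surjective⟩

/-- A quadruple `(M, F, V, ⟨·,·⟩)`: a finite-dimensional `k`-vector space `M` of dimension
`2g`, a Frobenius-semilinear `F : M → M`, an inverse-Frobenius-semilinear `V : M → M` with
`ker F = im V` and `ker V = im F`, and a nondegenerate alternating bilinear form
`⟨·,·⟩ = B` on `M` with `⟨F x, y⟩ = ⟨x, V y⟩ ^ p`.  (These are the Dieudonné spaces of
principally quasi-polarized BT₁ group schemes over `k`.) -/
structure PolarizedBT1Space (p : ℕ) [Fact p.Prime] (k : Type) [Field k] [CharP k p]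
    [PerfectRing k p] (g : ℕ) where
  M : Type
  [addCommGroup : AddCommGroup M]
  [module : Module k M]
  [finiteDimensional : FiniteDimensional k M]
  hdim : finrank k M = 2 * g
  F : M →ₛₗ[frobenius k p] M
  V : M →ₛₗ[((frobeniusEquiv k p).symm : k →+* k)] M
  hFV : LinearMap.ker F = LinearMap.range V
  hVF : LinearMap.ker V = LinearMap.range F
  B : M →ₗ[k] M →ₗ[k] k
  halt : ∀ x, B x x = 0
  hnondeg : ∀ x, (∀ y, B x y = 0) → x = 0
  hcompat : ∀ x y, B (F x) y = (B x (V y)) ^ p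

attribute [instance] PolarizedBT1Space.addCommGroup PolarizedBT1Space.module
  PolarizedBT1Space.finiteDimensional

/-- Two quadruples are isomorphic if there is a `k`-linear bijection commuting with `F` and
`V` and taking one alternating form to the other. -/
def PolarizedBT1Space.Iso {p : ℕ} [Fact p.Prime] {k : Type} [Field k] [CharP k p]
    [PerfectRing k p] {g : ℕ} (X Y : PolarizedBT1Space p k g) : Prop :=
  ∃ α : X.M ≃ₗ[k] Y.M, (∀ x, α (X.F x) = Y.F (α x)) ∧ (∀ x, α (X.V x) = Y.V (α x)) ∧
    ∀ x y, Y.B (α x) (α y) = X.B x y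

/-!
The subspaces obtained from `0` and `M` by applying `V` and `F⁻¹` form a chain, the canonical
filtration, which is stable under `V`, `F⁻¹` and `⊥`. Numbering such a stable chain as
`W 0 < ⋯ < W (2l)` gives a final sequence `v` with `V (W i) = W (v i)`, and `F` and `V` then permute
the graded pieces. As long as a graded piece has dimension at least `2`, the chain can be refined:
by Lang's theorem, over an algebraically closed field the semilinear map given by going once around
an orbit of this permutation has enough fixed vectors, among which there is an isotropic one. The
final sequence of a full stable flag depends only on the canonical filtration, since `v` is either
constant or of slope `1` between two consecutive members of it.

Two spaces with the same final sequence are isomorphic: Lang's theorem lifts generators of the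
graded pieces to vectors which `F` and `V` permute up to replacing some of them by `0`, normalises
their pairings `⟨x i, x (2l - 1 - i)⟩`, and then removes the remaining pairings one antidiagonal at
a time. Conversely each final sequence is realised on a coordinate space, and a final sequence of
length `2g` is determined by its arbitrary set of jumps below `g`.
-/

/-! ### Lang's theorem for semilinear maps -/

section FixedPoint

open Polynomial

variable {k : Type*} [Field k] [IsAlgClosed k]

theorem exists_eval_eq_self {P : k[X]} (hP : derivative P = 0) : ∃ z, P.eval z = z := by
  have hdeg : (P - X).degree ≠ 0 := fun h => by
    have hder : derivative (P - X) = -1 := by simp [hP]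
    rw [eq_C_of_degree_eq_zero h] at hder
    simp at hder
  obtain ⟨z, hz⟩ := IsAlgClosed.exists_root _ hdeg
  exact ⟨z, by simpa [IsRoot, sub_eq_zero] using hz⟩

theorem exists_ne_eval_eq_self {P : k[X]} (hP : derivative P = 0) (hdeg : 1 < P.natDegree)
    (c : k) : ∃ z, z ≠ c ∧ P.eval z = z := by
  classical
  have hnat : (P - X).natDegree = P.natDegree :=
    natDegree_sub_eq_left_of_natDegree_lt (by rwa [natDegree_X])
  have hsep : (P - X).Separable := ⟨0, -1, by simp [hP]⟩
  have hcard : 1 < (P - X).roots.toFinset.card := by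
    rwa [Multiset.toFinset_card_of_nodup (nodup_roots hsep),
      IsAlgClosed.card_roots_eq_natDegree, hnat]
  obtain ⟨z, hz, hzc⟩ := Finset.exists_mem_ne hcard c
  rw [Multiset.mem_toFinset] at hz
  exact ⟨z, hzc, by simpa [IsRoot, sub_eq_zero] using isRoot_of_mem_roots hz⟩

end FixedPoint

section Lang

open Polynomial

theorem exists_eq_add_sum_smul_of_lt {k Q : Type*} [Ring k] [AddCommGroup Q] [Module k Q]
    [IsNoetherian k Q] (G : Submodule k Q) (w : ℕ → Q) :
    ∃ n : ℕ, ∃ γ ∈ G, ∃ a : ℕ → k, w n = γ + ∑ j ∈ Finset.range n, a j • w j := by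
  let A : ℕ →o Submodule k Q :=
    ⟨fun n => G ⊔ Submodule.span k (w '' (Finset.range n : Set ℕ)), fun m n h => by
      dsimp only
      gcongr⟩
  obtain ⟨n, hn⟩ := WellFoundedGT.monotone_chain_condition A
  have hmem : w n ∈ A (n + 1) :=
    Submodule.mem_sup_right (Submodule.subset_span ⟨n, by simp, rfl⟩)
  rw [← hn (n + 1) (Nat.le_succ n)] at hmem
  obtain ⟨γ, hγ, y, hy, hsum⟩ := Submodule.mem_sup.mp hmem
  rw [Submodule.mem_span_image_finset_iff_exists_fun] at hy
  obtain ⟨a, ha⟩ := hy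
  refine ⟨n, γ, hγ, fun j => if h : j ∈ Finset.range n then a ⟨j, h⟩ else 0, ?_⟩
  rw [← hsum, ← ha, ← Finset.sum_coe_sort (Finset.range n)]
  simp only [Finset.coe_mem, dif_pos, Subtype.coe_eta]

variable {p : ℕ} {k : Type*} [Field k]

/-- The coefficients, as polynomials in the last one, of a solution of `u - f u = c • ν` in the
span of `ν, f ν, …, f^[m] ν`, where `f` is Frobenius-semilinear and
`f^[m + 1] ν = ∑ j ≤ m, a j • f^[j] ν`. -/
noncomputable def krylovCoeff (p : ℕ) (c : k) (a : ℕ → k) : ℕ → k[X]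
  | 0 => C c + C (a 0) * X ^ p
  | j + 1 => krylovCoeff p c a j ^ p + C (a (j + 1)) * X ^ p

theorem derivative_krylovCoeff [CharP k p] (c : k) (a : ℕ → k) (j : ℕ) :
    derivative (krylovCoeff p c a j) = 0 := by
  cases j <;> simp [krylovCoeff, derivative_pow]

variable [Fact p.Prime]

theorem natDegree_krylovCoeff_zero (a : ℕ → k) (ha : a 0 ≠ 0) (j : ℕ) :
    (krylovCoeff p 0 a j).natDegree = p ^ (j + 1) := by
  induction j with
  | zero => simp [krylovCoeff, natDegree_C_mul_X_pow _ _ ha]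
  | succ j ih =>
    have hpow : (krylovCoeff p 0 a j ^ p).natDegree = p ^ (j + 1 + 1) := by
      rw [natDegree_pow, ih, mul_comm, ← pow_succ]
    rw [krylovCoeff, natDegree_add_eq_left_of_natDegree_lt, hpow]
    calc (C (a (j + 1)) * X ^ p).natDegree ≤ p := natDegree_C_mul_X_pow_le _ _
      _ = p ^ 1 := (pow_one p).symm
      _ < p ^ (j + 1 + 1) := Nat.pow_lt_pow_right (Fact.out : p.Prime).one_lt (by lia)
      _ = _ := hpow.symm

variable [CharP k p] {Q : Type*} [AddCommGroup Q] [Module k Q] (f : Q →ₛₗ[frobenius k p] Q)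

theorem sum_krylovCoeff_sub_map {ν γ : Q} {m : ℕ} {a : ℕ → k}
    (h : f^[m + 1] ν = γ + ∑ j ∈ Finset.range (m + 1), a j • f^[j] ν) {c z : k}
    (hz : (krylovCoeff p c a m).eval z = z) :
    (∑ j ∈ Finset.range (m + 1), (krylovCoeff p c a j).eval z • f^[j] ν) -
      f (∑ j ∈ Finset.range (m + 1), (krylovCoeff p c a j).eval z • f^[j] ν) =
      c • ν - z ^ p • γ := by
  have hmap : f (∑ j ∈ Finset.range (m + 1), (krylovCoeff p c a j).eval z • f^[j] ν) =
      ∑ j ∈ Finset.range (m + 1), (krylovCoeff p c a j).eval z ^ p • f^[j + 1] ν := by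
    simp only [map_sum, map_smulₛₗ, frobenius_def, Function.iterate_succ_apply']
  have hsucc : ∑ j ∈ Finset.range m, (krylovCoeff p c a (j + 1)).eval z • f^[j + 1] ν =
      ∑ j ∈ Finset.range m, (krylovCoeff p c a j).eval z ^ p • f^[j + 1] ν +
      z ^ p • ∑ j ∈ Finset.range m, a (j + 1) • f^[j + 1] ν := by
    rw [Finset.smul_sum, ← Finset.sum_add_distrib]
    refine Finset.sum_congr rfl fun j _ => ?_
    simp only [krylovCoeff, eval_add, eval_pow, eval_mul, eval_C, eval_X]
    module
  rw [hmap, Finset.sum_range_succ (fun j => (krylovCoeff p c a j).eval z ^ p • f^[j + 1] ν),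
    Finset.sum_range_succ' (fun j => (krylovCoeff p c a j).eval z • f^[j] ν), hz, hsucc, h,
    Finset.sum_range_succ' (fun j => a j • f^[j] ν) m]
  simp only [Function.iterate_zero, id, krylovCoeff, eval_add, eval_pow, eval_mul, eval_C, eval_X]
  module

variable {f}

theorem exists_sub_map_eq [IsAlgClosed k] [FiniteDimensional k Q] {S : Submodule k Q}
    (hS : Set.MapsTo f S S) {ν : Q} (hν : ν ∈ S) :
    ∃ u ∈ S, u - f u = ν := by
  obtain ⟨n, γ, hγ, a, h⟩ := exists_eq_add_sum_smul_of_lt (⊥ : Submodule k Q) fun j => f^[j] ν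
  obtain rfl : γ = 0 := hγ
  cases n with
  | zero => exact ⟨0, S.zero_mem, by simpa using h.symm⟩
  | succ m =>
    obtain ⟨z, hz⟩ := exists_eval_eq_self (derivative_krylovCoeff (p := p) 1 a m)
    refine ⟨_, ?_, (sum_krylovCoeff_sub_map f h hz).trans (by simp)⟩
    exact S.sum_mem fun j _ => S.smul_mem _ (hS.iterate j hν)

theorem exists_iterate_eq_add_sum_of_coeff_zero [PerfectRing k p] {S G : Submodule k Q}
    (hS : Set.MapsTo f S S) (hG : ∀ y ∈ S, f y ∈ G → y ∈ G) {ν : Q} (hν : ν ∈ S) {m : ℕ}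
    {γ : Q} (hγ : γ ∈ G) {a : ℕ → k} (ha : a 0 = 0)
    (h : f^[m + 1] ν = γ + ∑ j ∈ Finset.range (m + 1), a j • f^[j] ν) :
    ∃ γ ∈ G, ∃ a : ℕ → k, f^[m] ν = γ + ∑ j ∈ Finset.range m, a j • f^[j] ν := by
  set b : ℕ → k := fun j => (frobeniusEquiv k p).symm (a (j + 1))
  have hmap : f (f^[m] ν - ∑ j ∈ Finset.range m, b j • f^[j] ν) = γ := by
    rw [map_sub, ← Function.iterate_succ_apply' f, h, Finset.sum_range_succ', ha, map_sum]
    simp [b, map_smulₛₗ, ← Function.iterate_succ_apply' f]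
  have hmem : f^[m] ν - ∑ j ∈ Finset.range m, b j • f^[j] ν ∈ S :=
    S.sub_mem (hS.iterate m hν) (S.sum_mem fun j _ => S.smul_mem _ (hS.iterate j hν))
  exact ⟨_, hG _ hmem (hmap ▸ hγ), b, (sub_add_cancel _ _).symm⟩

theorem exists_notMem_map_sub_mem [PerfectRing k p] [IsAlgClosed k] [FiniteDimensional k Q]
    {S G : Submodule k Q} (hS : Set.MapsTo f S S) (hG : ∀ y ∈ S, f y ∈ G → y ∈ G) {ν : Q}
    (hν : ν ∈ S) (hνG : ν ∉ G) : ∃ x ∈ S, x ∉ G ∧ f x - x ∈ G := by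
  classical
  have hex := exists_eq_add_sum_smul_of_lt G fun j => f^[j] ν
  obtain ⟨γ, hγ, a, h⟩ := Nat.find_spec hex
  have hmin := fun m hm => Nat.find_min hex (m := m) hm
  generalize Nat.find hex = n at *
  obtain _ | m := n
  · simp only [Function.iterate_zero, id, Finset.range_zero, Finset.sum_empty, add_zero] at h
    exact absurd (h ▸ hγ) hνG
  have ha : a 0 ≠ 0 := fun ha =>
    hmin m m.lt_succ_self (exists_iterate_eq_add_sum_of_coeff_zero hS hG hν hγ ha h)
  obtain ⟨z, hz0, hz⟩ := exists_ne_eval_eq_self (derivative_krylovCoeff (p := p) 0 a m)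
    (by rw [natDegree_krylovCoeff_zero a ha]
        exact Nat.one_lt_pow m.succ_ne_zero (Fact.out : p.Prime).one_lt) 0
  refine ⟨∑ j ∈ Finset.range (m + 1), (krylovCoeff p 0 a j).eval z • f^[j] ν,
    S.sum_mem fun j _ => S.smul_mem _ (hS.iterate j hν), fun hx => ?_, ?_⟩
  · rw [Finset.sum_range_succ, hz] at hx
    refine hmin m m.lt_succ_self
      ⟨_, G.smul_mem z⁻¹ hx, fun j => -(z⁻¹ * (krylovCoeff p 0 a j).eval z), ?_⟩
    simp only [smul_add, Finset.smul_sum, smul_smul, inv_mul_cancel₀ hz0, one_smul, neg_smul,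
      Finset.sum_neg_distrib]
    abel
  · rw [← neg_sub, sum_krylovCoeff_sub_map f h hz]
    simpa using G.smul_mem _ hγ

variable (f) in
theorem mapsTo_span_fixed (S : Submodule k Q) :
    Set.MapsTo f (Submodule.span k {x | x ∈ S ∧ f x = x})
      (Submodule.span k {x | x ∈ S ∧ f x = x}) := fun x hx => by
  rw [SetLike.mem_coe] at hx ⊢
  induction hx using Submodule.span_induction with
  | mem x hx => exact hx.2.symm ▸ Submodule.subset_span hx
  | zero => simp
  | add x y _ _ hx hy => rw [map_add]; exact add_mem hx hy
  | smul a x _ hx => rw [map_smulₛₗ]; exact Submodule.smul_mem _ _ hx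

theorem exists_map_eq_of_mem_span_fixed [PerfectRing k p] {S : Submodule k Q} {x : Q}
    (hx : x ∈ Submodule.span k {x | x ∈ S ∧ f x = x}) :
    ∃ y ∈ Submodule.span k {x | x ∈ S ∧ f x = x}, f y = x := by
  induction hx using Submodule.span_induction with
  | mem x hx => exact ⟨x, Submodule.subset_span hx, hx.2⟩
  | zero => exact ⟨0, zero_mem _, map_zero f⟩
  | add x y _ _ hx hy =>
    obtain ⟨u, hu, rfl⟩ := hx
    obtain ⟨v, hv, rfl⟩ := hy
    exact ⟨u + v, add_mem hu hv, map_add f u v⟩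
  | smul a x _ hx =>
    obtain ⟨u, hu, rfl⟩ := hx
    exact ⟨(frobeniusEquiv k p).symm a • u, Submodule.smul_mem _ _ hu, by simp [map_smulₛₗ]⟩

-- If some vector of `S` escaped the right-hand side `G`, there would be one that is fixed modulo
-- `G`; correcting it by an element of `G` makes it fixed.
theorem le_sup_span_fixed [PerfectRing k p] [IsAlgClosed k] [FiniteDimensional k Q]
    {S N : Submodule k Q} (hS : Set.MapsTo f S S) (hNS : N ≤ S) (hN : Set.MapsTo f N N)
    (hSN : ∀ y ∈ S, f y ∈ N → y ∈ N) : S ≤ N ⊔ Submodule.span k {x | x ∈ S ∧ f x = x} := by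
  set T := Submodule.span k {x | x ∈ S ∧ f x = x}
  have hTS : T ≤ S := Submodule.span_le.mpr fun x hx => hx.1
  have hmaps : Set.MapsTo f (N ⊔ T : Submodule k Q) (N ⊔ T : Submodule k Q) := fun x hx => by
    obtain ⟨y, hy, z, hz, rfl⟩ := Submodule.mem_sup.mp hx
    rw [map_add]
    exact Submodule.add_mem_sup (hN hy) (mapsTo_span_fixed f S hz)
  have hreflect : ∀ y ∈ S, f y ∈ N ⊔ T → y ∈ N ⊔ T := fun y hy hfy => by
    obtain ⟨n, hn, t, ht, hnt⟩ := Submodule.mem_sup.mp hfy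
    obtain ⟨s, hs, rfl⟩ := exists_map_eq_of_mem_span_fixed ht
    have hys : y - s ∈ N := hSN _ (S.sub_mem hy (hTS hs))
      (by rwa [map_sub, ← hnt, add_sub_cancel_right])
    exact sub_add_cancel y s ▸ Submodule.add_mem_sup hys hs
  intro ν hν
  by_contra hνG
  obtain ⟨x, hx, hxG, hfx⟩ := exists_notMem_map_sub_mem hS hreflect hν hνG
  obtain ⟨u, hu, hfu⟩ := exists_sub_map_eq hmaps hfx
  have hfix : f (x + u) = x + u := by
    rw [map_add, ← sub_eq_iff_eq_add', add_sub_right_comm, ← hfu, sub_add_cancel]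
  have hxu : x + u ∈ T := Submodule.subset_span ⟨S.add_mem hx (sup_le hNS hTS hu), hfix⟩
  exact hxG (add_sub_cancel_right x u ▸ sub_mem (Submodule.mem_sup_right hxu) hu)

end Lang

/-! ### Semilinear equations along the orbits of a permutation -/

section Torus

variable {p : ℕ} {k : Type*} [Field k] {ι : Type*}

/-- The product of `u` along `Nat.card (Equiv.Perm ι)` steps of the `π`-orbit of `i`, twisted by
Frobenius. Since `π` to that power is the identity, the product telescopes in
`twistedNorm_perm_pow`. -/
noncomputable def twistedNorm (p : ℕ) (π : Equiv.Perm ι) (u : ι → k) (i : ι) : k :=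
  ∏ j ∈ Finset.range (Nat.card (Equiv.Perm ι)), u ((π ^ j) i) ^ p ^ j

theorem twistedNorm_ne_zero (π : Equiv.Perm ι) {u : ι → k} (hu : ∀ i, u i ≠ 0) (i : ι) :
    twistedNorm p π u i ≠ 0 :=
  Finset.prod_ne_zero_iff.mpr fun _ _ => pow_ne_zero _ (hu _)

theorem twistedNorm_mul (π : Equiv.Perm ι) (u u' : ι → k) (i : ι) :
    twistedNorm p π (u * u') i = twistedNorm p π u i * twistedNorm p π u' i := by
  simp only [twistedNorm, Pi.mul_apply, mul_pow, Finset.prod_mul_distrib]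

theorem twistedNorm_comp {π : Equiv.Perm ι} {r : ι → ι} (hπr : ∀ i, π (r i) = r (π i))
    (u : ι → k) (i : ι) : twistedNorm p π u (r i) = twistedNorm p π (u ∘ r) i := by
  have hpow : ∀ j : ℕ, (π ^ j) (r i) = r ((π ^ j) i) := fun j => by
    simpa only [Equiv.Perm.iterate_eq_pow] using Function.Commute.iterate_left hπr j i
  simp only [twistedNorm, hpow, Function.comp_apply]

theorem twistedNorm_perm_pow (π : Equiv.Perm ι) {u : ι → k} {i : ι} (hu : u i ≠ 0)
    (hp : p ≠ 0) : twistedNorm p π u (π i) ^ p =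
      twistedNorm p π u i * u i ^ (p ^ Nat.card (Equiv.Perm ι) - 1) := by
  set N := Nat.card (Equiv.Perm ι) with hN
  have hcycle : π ^ N = 1 := pow_card_eq_one'
  have hone : p ^ N - 1 + 1 = p ^ N :=
    Nat.sub_add_cancel (Nat.one_le_pow _ _ (Nat.pos_of_ne_zero hp))
  refine mul_right_cancel₀ hu ?_
  calc twistedNorm p π u (π i) ^ p * u i
      = ∏ j ∈ Finset.range (N + 1), u ((π ^ j) i) ^ p ^ j := by
        rw [Finset.prod_range_succ', twistedNorm, ← Finset.prod_pow]
        simp only [← pow_mul, ← pow_succ, ← Equiv.Perm.mul_apply, ← hN, pow_zero, pow_one,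
          Equiv.Perm.one_apply]
    _ = twistedNorm p π u i * u i ^ (p ^ N - 1) * u i := by
        rw [Finset.prod_range_succ, hcycle, mul_assoc, ← pow_succ, hone]
        rfl

theorem twistedNorm_eq_mul_pow (π : Equiv.Perm ι) {u S : ι → k} (hp : p ≠ 0)
    (hu : ∀ i, u i ≠ 0) (huS : ∀ i, u i ^ (p ^ Nat.card (Equiv.Perm ι) - 1) * S i = 1) (i : ι) :
    twistedNorm p π u i = S i * twistedNorm p π u (π i) ^ p := by
  rw [twistedNorm_perm_pow π (hu i) hp, mul_left_comm, mul_comm (S i), huS, mul_one]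

variable [IsAlgClosed k]

theorem exists_pow_mul_eq_one {n : ℕ} (hn : 0 < n) :
    ∃ root : k → k, ∀ x, x ≠ 0 → root x ≠ 0 ∧ root x ^ n * x = 1 := by
  choose root hroot using fun x : k => IsAlgClosed.exists_pow_nat_eq x⁻¹ hn
  refine ⟨root, fun x hx => ⟨fun h => ?_, by rw [hroot, inv_mul_cancel₀ hx]⟩⟩
  exact inv_ne_zero hx (by rw [← hroot, h, zero_pow hn.ne'])

variable [Fact p.Prime] [Finite ι] {π : Equiv.Perm ι} {r : ι → ι} {h : ι → Prop}

theorem exists_eq_mul_perm_pow_of_mul_eq_one (hr : ∀ i, r (r i) = i)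
    (hπr : ∀ i, π (r i) = r (π i)) (hh : ∀ i, h (r i) ↔ ¬ h i) {S : ι → k}
    (hS0 : ∀ i, S i ≠ 0) (hS : ∀ i, S i * S (r i) = 1) :
    ∃ s : ι → k, (∀ i, s i = S i * s (π i) ^ p) ∧ ∀ i, s i * s (r i) = 1 := by
  classical
  have hp : p.Prime := Fact.out
  obtain ⟨root, hroot⟩ := exists_pow_mul_eq_one (k := k)
    (Nat.sub_pos_of_lt (Nat.one_lt_pow (Nat.card_pos (α := Equiv.Perm ι)).ne' hp.one_lt))
  set u : ι → k := fun i => if h i then root (S i) else (root (S (r i)))⁻¹ with hu_def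
  have hu0 : ∀ i, u i ≠ 0 := fun i => by
    simp only [hu_def]
    split_ifs <;> simp [(hroot _ (hS0 _)).1]
  have hur : u * (u ∘ r) = 1 := funext fun i => by
    by_cases hi : h i <;> simp [hu_def, hh, hi, hr, (hroot _ (hS0 _)).1]
  have huS : ∀ i, u i ^ (p ^ Nat.card (Equiv.Perm ι) - 1) * S i = 1 := fun i => by
    simp only [hu_def]
    split_ifs
    · exact (hroot _ (hS0 i)).2
    · rw [inv_pow, eq_inv_of_mul_eq_one_left (hroot _ (hS0 (r i))).2, inv_inv, mul_comm, hS]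
  refine ⟨twistedNorm p π u, twistedNorm_eq_mul_pow π hp.ne_zero hu0 huS, fun i => ?_⟩
  rw [twistedNorm_comp hπr, ← twistedNorm_mul, hur]
  simp [twistedNorm]

theorem exists_eq_mul_perm_pow (hr : ∀ i, r (r i) = i) (hπr : ∀ i, π (r i) = r (π i))
    (hh : ∀ i, h (r i) ↔ ¬ h i) {R μ : ι → k} (hR : ∀ i, R i ≠ 0) (hμ : ∀ i, μ i ≠ 0)
    (hμr : ∀ i, μ (r i) = μ i) (hRμ : ∀ i, R i * R (r i) * μ (π i) ^ p = μ i) :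
    ∃ t : ι → k, (∀ i, t i = R i * t (π i) ^ p) ∧ ∀ i, t i * t (r i) = μ i := by
  classical
  set t₀ : ι → k := fun i => if h i then μ i else 1 with ht₀_def
  have ht₀ : ∀ i, t₀ i ≠ 0 := fun i => by
    simp only [ht₀_def]
    split_ifs <;> simp [hμ]
  have ht₀r : ∀ i, t₀ i * t₀ (r i) = μ i := fun i => by
    by_cases hi : h i <;> simp [ht₀_def, hh, hi, hμr]
  obtain ⟨s, hsπ, hsr⟩ := exists_eq_mul_perm_pow_of_mul_eq_one (p := p) hr hπr hh
    (S := fun i => R i * t₀ (π i) ^ p / t₀ i)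
    (fun i => div_ne_zero (mul_ne_zero (hR i) (pow_ne_zero _ (ht₀ _))) (ht₀ _)) fun i => by
      have hi := ht₀ i
      have hri := ht₀ (r i)
      have hRi := hRμ i
      rw [← ht₀r (π i), ← ht₀r i] at hRi
      simp only [hπr]
      field_simp
      rw [← hRi]
      ring
  refine ⟨fun i => t₀ i * s i, fun i => ?_, fun i => ?_⟩
  · have hi := ht₀ i
    dsimp only
    rw [hsπ i]
    field_simp
    rw [mul_pow, mul_assoc]
  · calc t₀ i * s i * (t₀ (r i) * s (r i)) = t₀ i * t₀ (r i) * (s i * s (r i)) := by ring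
      _ = μ i := by rw [hsr, ht₀r, mul_one]

theorem exists_perm_pow_eq_neg [CharP k p] (hπr : ∀ i, π (r i) = r (π i))
    (hh : ∀ i, h (r i) ↔ ¬ h i) : ∃ β : ι → k,
      (∀ i, β i ≠ 0) ∧ (∀ i, β i = β (π i) ^ p) ∧ ∀ i, β (r i) = -β i := by
  classical
  have hp : p.Prime := Fact.out
  obtain ⟨root, hroot⟩ := exists_pow_mul_eq_one (k := k)
    (Nat.sub_pos_of_lt (Nat.one_lt_pow (Nat.card_pos (α := Equiv.Perm ι)).ne' hp.one_lt))
  set β₀ : ι → k := fun i => if h i then 1 else -1 with hβ₀_def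
  have hβ₀ : ∀ i, β₀ i ≠ 0 := fun i => by
    simp only [hβ₀_def]
    split_ifs <;> simp
  have hβ₀r : ∀ i, β₀ (r i) = -β₀ i := fun i => by
    by_cases hi : h i <;> simp [hβ₀_def, hh, hi]
  set S : ι → k := fun i => β₀ (π i) ^ p / β₀ i with hS_def
  have hS0 : ∀ i, S i ≠ 0 := fun i => div_ne_zero (pow_ne_zero _ (hβ₀ _)) (hβ₀ i)
  have hSr : ∀ i, S (r i) = S i := fun i => by
    simp only [hS_def, hπr, hβ₀r, ← frobenius_def p, map_neg, neg_div_neg_eq]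
  set s := twistedNorm p π fun i => root (S i) with hs_def
  have hs0 : ∀ i, s i ≠ 0 := twistedNorm_ne_zero π fun i => (hroot _ (hS0 i)).1
  have hsπ : ∀ i, s i = S i * s (π i) ^ p :=
    twistedNorm_eq_mul_pow π hp.ne_zero (fun i => (hroot _ (hS0 i)).1)
      fun i => (hroot _ (hS0 i)).2
  have hsr : ∀ i, s (r i) = s i := fun i => by
    rw [hs_def, twistedNorm_comp hπr]
    simp only [Function.comp_def, hSr]
  refine ⟨fun i => β₀ i * s i, fun i => mul_ne_zero (hβ₀ i) (hs0 i), fun i => ?_, fun i => ?_⟩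
  · calc β₀ i * s i = β₀ i * (β₀ (π i) ^ p / β₀ i * s (π i) ^ p) := by rw [hsπ]
      _ = (β₀ (π i) * s (π i)) ^ p := by
        rw [← mul_assoc, mul_div_cancel₀ _ (hβ₀ i), mul_pow]
  · simp only [hsr, hβ₀r, neg_mul]

theorem exists_perm_pow_eq_mul_eq (hr : ∀ i, r (r i) = i) (hπr : ∀ i, π (r i) = r (π i))
    (hh : ∀ i, h (r i) ↔ ¬ h i) {μ : ι → k} (hμr : ∀ i, μ (r i) = μ i)
    (hμ : ∀ i, μ i = μ (π i) ^ p) :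
    ∃ α : ι → k, (∀ i, α i = α (π i) ^ p) ∧ ∀ i, α i * α (r i) = μ i := by
  classical
  have hp0 : p ≠ 0 := (Fact.out : p.Prime).ne_zero
  have hzero : ∀ i, μ (π i) = 0 ↔ μ i = 0 := fun i => by rw [hμ i, pow_eq_zero_iff hp0]
  obtain ⟨t, htπ, htr⟩ := exists_eq_mul_perm_pow (p := p) hr hπr hh (R := fun _ => 1)
    (μ := fun i => if μ i = 0 then 1 else μ i) (by simp)
    (fun i => by split_ifs with hi; exacts [one_ne_zero, hi])
    (by simp only [hμr, implies_true]) (fun i => by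
      simp only [hzero]
      split_ifs
      · simp
      · rw [mul_one, one_mul, ← hμ])
  refine ⟨fun i => if μ i = 0 then 0 else t i, fun i => ?_, fun i => ?_⟩
  · simp only [hzero]
    split_ifs
    · rw [zero_pow hp0]
    · rw [htπ, one_mul]
  · simp only [hμr]
    split_ifs with hi
    · rw [mul_zero, hi]
    · rw [htr, if_neg hi]

-- Completing the square: where `xx ≠ 0` take `D = 1` and `A = α - xy (r i) / xx (r i)`, with
-- `α i * α (r i)` the negative of the remaining constant divided by `xx i`.
theorem exists_isotropic_combination [CharP k p] (hr : ∀ i, r (r i) = i)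
    (hπr : ∀ i, π (r i) = r (π i)) (hh : ∀ i, h (r i) ↔ ¬ h i) {xx xy yy : ι → k}
    (hxx : ∀ i, xx i = xx (π i) ^ p) (hxy : ∀ i, xy i = xy (π i) ^ p)
    (hyy : ∀ i, yy i = yy (π i) ^ p) (hxxr : ∀ i, xx (r i) = -xx i)
    (hyyr : ∀ i, yy (r i) = -yy i) :
    ∃ A D : ι → k, (∀ i, A i = A (π i) ^ p) ∧ (∀ i, D i = D (π i) ^ p) ∧
      (∀ i, A i ≠ 0 ∨ D i ≠ 0) ∧
      ∀ i, A i * A (r i) * xx i + A i * D (r i) * xy i - D i * A (r i) * xy (r i) +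
        D i * D (r i) * yy i = 0 := by
  classical
  have hp0 : p ≠ 0 := (Fact.out : p.Prime).ne_zero
  have hzero : ∀ i, xx (π i) = 0 ↔ xx i = 0 := fun i => by rw [hxx i, pow_eq_zero_iff hp0]
  set Y : ι → k := fun i => yy i + xy i * xy (r i) / xx i with hY_def
  obtain ⟨α, hα, hαr⟩ := exists_perm_pow_eq_mul_eq (p := p) hr hπr hh
    (μ := fun i => -Y i / xx i)
    (fun i => by simp only [hY_def, hr, hyyr, hxxr, div_neg]; ring)
    (fun i => by
      simp only [hY_def, ← frobenius_def p, map_div₀, map_neg, map_add, map_mul] at hxx hxy hyy ⊢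
      simp only [← hπr, ← hxy, ← hxx, ← hyy])
  refine ⟨fun i => if xx i = 0 then 1 else α i - xy (r i) / xx (r i),
    fun i => if xx i = 0 then 0 else 1, fun i => ?_, fun i => ?_, fun i => ?_, fun i => ?_⟩
  · simp only [hzero]
    split_ifs
    · rw [one_pow]
    · simp only [← frobenius_def p, map_div₀, map_sub] at hα hxx hxy ⊢
      simp only [← hπr, ← hxy, ← hxx, ← hα]
  · simp only [hzero]
    split_ifs <;> simp [hp0]
  · by_cases hx : xx i = 0 <;> simp [hx]
  · simp only [hxxr, neg_eq_zero, hr]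
    by_cases hx : xx i = 0
    · simp [hx]
    · have hαα := hαr i
      simp only [hx, if_false, hY_def] at hαα ⊢
      field_simp at hαα ⊢
      linear_combination hαα

end Torus

/-! ### Final sequences -/

/-- A final sequence in the sense of Ekedahl and Oort: `v 0 = 0`, each step is `0` or `1`, and
`v (2l - i) = v i + l - i`. The sequence lives on `{0, …, 2l}`; it is extended by the constant `l`
so that it is determined as a function on `ℕ`. -/
structure IsFinalSequence (l : ℕ) (v : ℕ → ℕ) : Prop where
  zero : v 0 = 0
  step : ∀ i, v (i + 1) = v i ∨ v (i + 1) = v i + 1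
  symm : ∀ i ≤ 2 * l, v (2 * l - i) + i = l + v i
  eq_of_le : ∀ i, 2 * l ≤ i → v i = l

/-- The step of `v` from `i` to `i + 1` is `1`. -/
def JumpsAt (v : ℕ → ℕ) (i : ℕ) : Prop := v (i + 1) = v i + 1

instance (v : ℕ → ℕ) : DecidablePred (JumpsAt v) := fun _ => Nat.decEq _ _

/-- The values of `IsFinalSequence.perm`. They exhaust `{0, …, 2l - 1}`: the jumps of a final
sequence `v` are sent to `{0, …, l - 1}` and its other steps to `{l, …, 2l - 1}`. -/
def finalIndex (l : ℕ) (v : ℕ → ℕ) (i : ℕ) : ℕ := if JumpsAt v i then v i else l + i - v i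

namespace IsFinalSequence

theorem exists_jumpsAt_iff_mem (s : Set ℕ) (l : ℕ) :
    ∃ v, IsFinalSequence l v ∧ ∀ i < l, JumpsAt v i ↔ i ∈ s := by
  classical
  set c : ℕ → ℕ := Nat.count (· ∈ s)
  have hc : ∀ i, c (i + 1) = c i + if i ∈ s then 1 else 0 := Nat.count_succ _
  have hc0 : c 0 = 0 := Nat.count_zero _
  have hstep : ∀ i, c (i + 1) = c i ∨ c (i + 1) = c i + 1 := fun i => by
    rw [hc]
    split_ifs
    exacts [.inr rfl, .inl rfl]
  set v : ℕ → ℕ := fun i => if i ≤ l then c i else min i (2 * l) - l + c (2 * l - i)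
  have lower : ∀ i ≤ l, v i = c i := fun i h => if_pos h
  have upper : ∀ i, l ≤ i → v i = min i (2 * l) - l + c (2 * l - i) := fun i h => by
    rcases h.eq_or_lt with rfl | h
    · rw [lower _ le_rfl, show 2 * l - l = l by lia]
      lia
    · exact if_neg h.not_ge
  refine ⟨v, ⟨by rw [lower 0 l.zero_le, hc0], fun i => ?_, fun i hi => ?_, fun i hi => ?_⟩,
    fun i hi => ?_⟩
  · rcases lt_or_ge i l with h | h
    · rw [lower i h.le, lower (i + 1) h]
      exact hstep i
    rw [upper i h, upper (i + 1) (by lia)]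
    rcases lt_or_ge i (2 * l) with h2 | h2
    · have := hstep (2 * l - (i + 1))
      rw [show 2 * l - (i + 1) + 1 = 2 * l - i by lia] at this
      lia
    · rw [show 2 * l - (i + 1) = 2 * l - i by lia]
      lia
  · rcases le_total i l with h | h
    · rw [lower i h, upper _ (by lia), show 2 * l - (2 * l - i) = i by lia]
      lia
    · rw [upper i h, lower _ (by lia)]
      lia
  · rw [upper i (by lia), show 2 * l - i = 0 by lia, hc0]
    lia
  · rw [JumpsAt, lower i hi.le, lower (i + 1) hi, hc]
    split_ifs with h <;> simp [h]

variable {l : ℕ} {v : ℕ → ℕ} (hv : IsFinalSequence l v)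
include hv

theorem monotone : Monotone v :=
  monotone_nat_of_le_succ fun i => by rcases hv.step i with h | h <;> lia

theorem add_le_add_of_le {i j : ℕ} (hij : i ≤ j) : v j + i ≤ v i + j := by
  induction j, hij using Nat.le_induction with
  | base => exact le_rfl
  | succ j _ ih => rcases hv.step j with h | h <;> lia

theorem le_half (i : ℕ) : v i ≤ l :=
  (hv.monotone (le_max_left i (2 * l))).trans_eq (hv.eq_of_le _ (le_max_right i (2 * l)))

theorem le_self (i : ℕ) : v i ≤ i := by
  have := hv.add_le_add_of_le (Nat.zero_le i)
  rw [hv.zero] at this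
  lia

theorem le_half_add {i : ℕ} (hi : i ≤ 2 * l) : i ≤ l + v i := by
  have := hv.add_le_add_of_le hi
  rw [hv.eq_of_le _ le_rfl] at this
  lia

theorem succ_eq_of_not_jumpsAt {i : ℕ} (h : ¬ JumpsAt v i) : v (i + 1) = v i :=
  (hv.step i).resolve_right h

theorem ext_jumpsAt {v' : ℕ → ℕ} (hv' : IsFinalSequence l v')
    (h : ∀ i < l, JumpsAt v i ↔ JumpsAt v' i) : v = v' := by
  have lower_half : ∀ i ≤ l, v i = v' i := fun i => by
    induction i with
    | zero => simp only [hv.zero, hv'.zero, implies_true]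
    | succ i ih =>
      intro hi
      have hjump : v (i + 1) = v i + 1 ↔ v' (i + 1) = v' i + 1 := h i hi
      rcases hv.step i with h₁ | h₁ <;> rcases hv'.step i with h₂ | h₂ <;> lia
  funext i
  rcases le_total (2 * l) i with hi | hi
  · rw [hv.eq_of_le i hi, hv'.eq_of_le i hi]
  rcases le_total i l with hil | hil
  · exact lower_half i hil
  · have h₁ := hv.symm i hi
    have h₂ := hv'.symm i hi
    have h₃ := lower_half (2 * l - i) (by lia)
    lia

theorem finalIndex_lt {i : ℕ} (hi : i < 2 * l) : finalIndex l v i < 2 * l := by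
  have h₁ := hv.le_half (i + 1)
  have h₂ := hv.le_half_add (i := i + 1) hi
  unfold finalIndex
  split_ifs with h
  · rw [JumpsAt] at h
    lia
  · rw [hv.succ_eq_of_not_jumpsAt h] at h₂
    lia

theorem finalIndex_lt_half_iff (i : ℕ) : finalIndex l v i < l ↔ JumpsAt v i := by
  have h₁ := hv.le_half (i + 1)
  have h₂ := hv.le_self i
  unfold finalIndex
  split_ifs with h
  · simp only [h, iff_true]
    rw [JumpsAt] at h
    lia
  · simp only [h, iff_false]
    lia

theorem injOn_finalIndex : Set.InjOn (finalIndex l v) (Set.Iio (2 * l)) := by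
  intro i hi j hj h
  wlog hij : i < j generalizing i j
  · by_contra hne
    exact hne (this hj hi h.symm (by lia)).symm
  have hmono := hv.monotone (Nat.succ_le_of_lt hij)
  have hgap := hv.add_le_add_of_le (Nat.succ_le_of_lt hij)
  have hji : JumpsAt v i ↔ JumpsAt v j := by
    rw [← hv.finalIndex_lt_half_iff, ← hv.finalIndex_lt_half_iff, h]
  have hi := hv.le_self i
  unfold finalIndex at h
  by_cases hjump : JumpsAt v i
  · rw [if_pos hjump, if_pos (hji.mp hjump)] at h
    rw [JumpsAt] at hjump
    lia
  · rw [if_neg hjump, if_neg (hjump ∘ hji.mpr)] at h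
    rw [Nat.succ_eq_add_one, hv.succ_eq_of_not_jumpsAt hjump] at hgap
    lia

/-- The permutation of the indices of a standard basis `e` induced by `F` and `V`: `V (e i)` is
`e (π i)` if `v` jumps at `i`, and `F (e (π i))` is `e i` otherwise. -/
noncomputable def perm : Equiv.Perm (Fin (2 * l)) :=
  Equiv.ofBijective (fun i => ⟨finalIndex l v i, hv.finalIndex_lt i.2⟩)
    (Finite.injective_iff_bijective.mp fun i j h =>
      Fin.ext (hv.injOn_finalIndex i.2 j.2 (by simpa using h)))

theorem perm_of_jumpsAt {i : Fin (2 * l)} (h : JumpsAt v i) : v i = hv.perm i :=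
  (if_pos h).symm

theorem succ_of_jumpsAt {i : Fin (2 * l)} (h : JumpsAt v i) : v (i + 1) = hv.perm i + 1 := by
  rw [← hv.perm_of_jumpsAt h]
  exact h

theorem perm_of_not_jumpsAt {i : Fin (2 * l)} (h : ¬ JumpsAt v i) : l + i - v i = hv.perm i :=
  (if_neg h).symm

theorem succ_of_not_jumpsAt {i : Fin (2 * l)} (h : ¬ JumpsAt v i) :
    l + (i + 1) - v (i + 1) = hv.perm i + 1 := by
  have hle := hv.le_self i
  rw [← hv.perm_of_not_jumpsAt h, hv.succ_eq_of_not_jumpsAt h]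
  lia

theorem perm_lt_half_iff (i : Fin (2 * l)) : (hv.perm i : ℕ) < l ↔ JumpsAt v i :=
  hv.finalIndex_lt_half_iff i

theorem perm_lt_apply_iff {i : Fin (2 * l)} (hi : JumpsAt v i) (n : ℕ) :
    (hv.perm i : ℕ) < v n ↔ (i : ℕ) < n := by
  refine ⟨fun h => ?_, fun h => ?_⟩
  · rw [← hv.perm_of_jumpsAt hi] at h
    exact hv.monotone.reflect_lt h
  · exact (hv.succ_of_jumpsAt hi).symm.trans_le (hv.monotone h)

theorem perm_lt_sub_apply_iff {i : Fin (2 * l)} (hi : ¬ JumpsAt v i) (n : ℕ) :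
    (hv.perm i : ℕ) < l + n - v n ↔ (i : ℕ) < n := by
  have hi_le := hv.le_self i
  have hn_le := hv.le_self n
  rw [← hv.perm_of_not_jumpsAt hi]
  refine ⟨fun h => ?_, fun h => ?_⟩
  · by_contra! hni
    have := hv.add_le_add_of_le hni
    lia
  · have := hv.add_le_add_of_le (Nat.succ_le_of_lt h)
    have := hv.succ_eq_of_not_jumpsAt hi
    lia

theorem jumpsAt_rev_iff (i : Fin (2 * l)) : JumpsAt v i.rev ↔ ¬ JumpsAt v i := by
  have h₁ := hv.symm i i.2.le
  have h₂ := hv.symm (i + 1) i.2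
  rw [JumpsAt, JumpsAt, Fin.val_rev, show 2 * l - (i + 1) + 1 = 2 * l - i by lia]
  rcases hv.step i with h | h <;> lia

theorem perm_rev (i : Fin (2 * l)) : hv.perm i.rev = (hv.perm i).rev := by
  have h₁ := hv.symm (i + 1) i.2
  have h₃ := hv.le_self (i + 1)
  apply Fin.ext
  rw [Fin.val_rev (hv.perm i)]
  by_cases h : JumpsAt v i
  · rw [← hv.perm_of_not_jumpsAt ((hv.jumpsAt_rev_iff i).not.mpr (not_not.mpr h)),
      ← hv.succ_of_jumpsAt h, Fin.val_rev]
    lia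
  · rw [← hv.perm_of_jumpsAt ((hv.jumpsAt_rev_iff i).mpr h), ← hv.succ_of_not_jumpsAt h,
      Fin.val_rev]
    lia

end IsFinalSequence

/-! ### Stable chains and stable flags -/

section ChainEnumeration

theorem add_sub_le_of_strictMonoOn_Iic {s : ℕ → ℕ} {N : ℕ} (hs : StrictMonoOn s (Set.Iic N))
    {i j : ℕ} (hij : i ≤ j) (hj : j ≤ N) : s i + (j - i) ≤ s j := by
  induction j, hij using Nat.le_induction with
  | base => simp
  | succ j hij ih =>
    have hstep := hs (Set.mem_Iic.mpr (by lia)) (Set.mem_Iic.mpr hj) j.lt_succ_self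
    have := ih (by lia)
    lia

theorem eq_add_of_strictMonoOn_Iic {s : ℕ → ℕ} {N : ℕ} (hs : StrictMonoOn s (Set.Iic N))
    (hN : s N ≤ s 0 + N) {i : ℕ} (hi : i ≤ N) : s i = s 0 + i := by
  have h₁ := add_sub_le_of_strictMonoOn_Iic hs i.zero_le hi
  have h₂ := add_sub_le_of_strictMonoOn_Iic hs hi le_rfl
  lia

theorem exists_strictMonoOn_range_eq {α : Type*} [PartialOrder α] {C : Set α}
    (hC : IsChain (· ≤ ·) C) (hfin : C.Finite) (hne : C.Nonempty) :
    ∃ (N : ℕ) (W : ℕ → α), StrictMonoOn W (Set.Iic N) ∧ (∀ i, N ≤ i → W i = W N) ∧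
      Set.range W = C := by
  classical
  have := hfin.fintype
  have := hne.to_subtype
  let _ : LinearOrder C :=
    { (inferInstance : PartialOrder C) with
      le_total := fun a b => hC.total a.2 b.2
      toDecidableLE := Classical.decRel _ }
  obtain ⟨N, hN⟩ := Nat.exists_eq_succ_of_ne_zero (Fintype.card_ne_zero (α := C))
  let e := Fintype.orderIsoFinOfCardEq C hN
  refine ⟨N, fun i => e ⟨min i N, by lia⟩, fun i hi j hj hij => ?_, fun i hi => by simp [hi],
    Set.Subset.antisymm (Set.range_subset_iff.mpr fun i => (e _).2) fun a ha => ?_⟩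
  · refine e.lt_iff_lt.mpr ?_
    rw [Fin.mk_lt_mk, min_eq_left hi, min_eq_left hj]
    exact hij
  · refine ⟨e.symm ⟨a, ha⟩, ?_⟩
    have hle : (e.symm ⟨a, ha⟩ : ℕ) ≤ N := Fin.is_le _
    simp [min_eq_left hle]

end ChainEnumeration

namespace PolarizedBT1Space

variable {p : ℕ} [Fact p.Prime] {k : Type} [Field k] [CharP k p] [PerfectRing k p] {g : ℕ}
variable (X : PolarizedBT1Space p k g)

theorem B_swap (x y : X.M) : X.B x y = -X.B y x :=
  (LinearMap.IsAlt.neg X.halt y x).symm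

theorem B_V_pow (x y : X.M) : X.B (X.V x) y ^ p = X.B x (X.F y) := by
  rw [X.B_swap x, X.hcompat, X.B_swap y, ← frobenius_def p, ← frobenius_def p, map_neg, neg_neg]

theorem V_F (x : X.M) : X.V (X.F x) = 0 :=
  LinearMap.mem_ker.mp (X.hVF ▸ LinearMap.mem_range_self X.F x)

theorem F_V (x : X.M) : X.F (X.V x) = 0 :=
  LinearMap.mem_ker.mp (X.hFV ▸ LinearMap.mem_range_self X.V x)

theorem exists_F_eq {x : X.M} (h : X.V x = 0) : ∃ y, X.F y = x :=
  LinearMap.mem_range.mp (X.hVF ▸ LinearMap.mem_ker.mpr h)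

theorem comap_F_bot : (⊥ : Submodule k X.M).comap X.F = (⊤ : Submodule k X.M).map X.V := by
  rw [Submodule.map_top]
  exact X.hFV

theorem map_V_le_comap_F (A D : Submodule k X.M) : A.map X.V ≤ D.comap X.F := by
  rintro _ ⟨x, -, rfl⟩
  rw [Submodule.mem_comap, F_V]
  exact D.zero_mem

theorem mem_of_V_mem_map {A D : Submodule k X.M} (h : A ≤ D) (hF : A.comap X.F = D.comap X.F)
    {x : X.M} (hx : x ∈ D) (hVx : X.V x ∈ A.map X.V) : x ∈ A := by
  obtain ⟨a, ha, hax⟩ := hVx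
  obtain ⟨e, he⟩ := X.exists_F_eq (x := x - a) (by rw [map_sub, hax, sub_self])
  have hmem : e ∈ A.comap X.F := by
    rw [hF, Submodule.mem_comap, he]
    exact D.sub_mem hx (h ha)
  rw [Submodule.mem_comap, he] at hmem
  simpa using A.add_mem hmem ha

theorem eq_of_map_V_eq_of_comap_F_eq {A D : Submodule k X.M} (h : A ≤ D)
    (hV : A.map X.V = D.map X.V) (hF : A.comap X.F = D.comap X.F) : A = D :=
  le_antisymm h fun _ hd => X.mem_of_V_mem_map h hF hd (hV ▸ Submodule.mem_map_of_mem hd)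

/-- The orthogonal complement with respect to the form of `X`. -/
def orth (A : Submodule k X.M) : Submodule k X.M := LinearMap.BilinForm.orthogonal X.B A

theorem mem_orth {A : Submodule k X.M} {y : X.M} : y ∈ X.orth A ↔ ∀ x ∈ A, X.B x y = 0 :=
  Iff.rfl

theorem isRefl_B : LinearMap.BilinForm.IsRefl X.B := LinearMap.IsAlt.isRefl X.halt

theorem nondegenerate_B : LinearMap.BilinForm.Nondegenerate X.B :=
  ⟨X.hnondeg, fun x h => X.hnondeg x fun y => X.isRefl_B _ _ (h y)⟩

theorem orth_orth (A : Submodule k X.M) : X.orth (X.orth A) = A :=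
  LinearMap.BilinForm.orthogonal_orthogonal X.nondegenerate_B X.isRefl_B A

theorem orth_le_orth_iff {A D : Submodule k X.M} : X.orth A ≤ X.orth D ↔ D ≤ A :=
  ⟨fun h => by
    rw [← X.orth_orth A, ← X.orth_orth D]
    exact LinearMap.BilinForm.orthogonal_le h, LinearMap.BilinForm.orthogonal_le⟩

theorem le_orth_comm {A D : Submodule k X.M} : A ≤ X.orth D ↔ D ≤ X.orth A := by
  rw [← X.orth_le_orth_iff, X.orth_orth]

theorem orth_bot : X.orth ⊥ = ⊤ := LinearMap.BilinForm.orthogonal_bot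

theorem orth_top : X.orth ⊤ = ⊥ := by rw [← X.orth_bot, X.orth_orth]

theorem orth_map_V (A : Submodule k X.M) : X.orth (A.map X.V) = (X.orth A).comap X.F := by
  ext y
  simp only [Submodule.mem_comap, mem_orth, Submodule.mem_map, forall_exists_index, and_imp,
    forall_apply_eq_imp_iff₂, ← X.B_V_pow, pow_eq_zero_iff (Fact.out : p.Prime).ne_zero]

theorem orth_comap_F (A : Submodule k X.M) : X.orth (A.comap X.F) = (X.orth A).map X.V := by
  rw [← X.orth_orth ((X.orth A).map X.V), X.orth_map_V, X.orth_orth]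

theorem finite_of_isChain {C : Set (Submodule k X.M)} (hC : IsChain (· ≤ ·) C) : C.Finite := by
  refine Set.Finite.of_finite_image (f := fun A : Submodule k X.M => finrank k A)
    ((Set.finite_Iic (finrank k X.M)).subset ?_) fun A hA D hD h => ?_
  · rintro _ ⟨A, _, rfl⟩
    exact Submodule.finrank_le A
  · rcases hC.total hA hD with hle | hle
    exacts [Submodule.eq_of_le_of_finrank_eq hle h,
      (Submodule.eq_of_le_of_finrank_eq hle h.symm).symm]

/-- A chain of subspaces stable under `V`, `F⁻¹` and `⊥`. -/
structure IsStableChain (C : Set (Submodule k X.M)) : Prop where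
  isChain : IsChain (· ≤ ·) C
  bot_mem : ⊥ ∈ C
  map_V : ∀ A ∈ C, A.map X.V ∈ C
  comap_F : ∀ A ∈ C, A.comap X.F ∈ C
  orth : ∀ A ∈ C, X.orth A ∈ C

/-- A stable chain enumerated as `⊥ = W 0 < W 1 < ⋯ < W (2 * l) = ⊤`, where the action of `V`,
`F⁻¹` and `⊥` on the indices is the one prescribed by a final sequence. The enumeration is extended
by `⊤` beyond `2 * l`. -/
structure StableFlag (l : ℕ) where
  W : ℕ → Submodule k X.M
  v : ℕ → ℕ
  strictMonoOn : StrictMonoOn W (Set.Iic (2 * l))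
  W_zero : W 0 = ⊥
  W_of_le : ∀ i, 2 * l ≤ i → W i = ⊤
  isFinalSequence : IsFinalSequence l v
  map_V : ∀ i, (W i).map X.V = W (v i)
  comap_F : ∀ i, (W i).comap X.F = W (l + i - v i)
  orth : ∀ i, X.orth (W i) = W (2 * l - i)

/-- An enumerated stable chain, before the index maps `v`, `f` and `o` of `V`, `F⁻¹` and `⊥` have
been computed. -/
structure IndexedChain (N : ℕ) where
  W : ℕ → Submodule k X.M
  v : ℕ → ℕ
  f : ℕ → ℕ
  o : ℕ → ℕ
  strictMonoOn : StrictMonoOn W (Set.Iic N)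
  W_zero : W 0 = ⊥
  W_of_le : ∀ i, N ≤ i → W i = ⊤
  v_le : ∀ i, v i ≤ N
  f_le : ∀ i, f i ≤ N
  o_le : ∀ i, o i ≤ N
  map_V : ∀ i, (W i).map X.V = W (v i)
  comap_F : ∀ i, (W i).comap X.F = W (f i)
  orth : ∀ i, X.orth (W i) = W (o i)

variable {X}

theorem IsStableChain.exists_indexedChain {C : Set (Submodule k X.M)} (hC : X.IsStableChain C) :
    ∃ (N : ℕ) (K : X.IndexedChain N), Set.range K.W = C := by
  obtain ⟨N, W, hmono, hconst, rfl⟩ := exists_strictMonoOn_range_eq hC.isChain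
    (X.finite_of_isChain hC.isChain) ⟨⊥, hC.bot_mem⟩
  have hindex : ∀ A ∈ Set.range W, ∃ j ≤ N, A = W j := by
    rintro _ ⟨j, rfl⟩
    rcases le_total j N with hj | hj
    exacts [⟨j, hj, rfl⟩, ⟨N, le_rfl, hconst j hj⟩]
  have htop : ⊤ ∈ Set.range W := X.orth_bot ▸ hC.orth _ hC.bot_mem
  obtain ⟨i, hi, hWi⟩ := hindex _ hC.bot_mem
  obtain ⟨j, hj, hWj⟩ := hindex _ htop
  choose v hv hV using fun i => hindex _ (hC.map_V _ ⟨i, rfl⟩)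
  choose f hf hF using fun i => hindex _ (hC.comap_F _ ⟨i, rfl⟩)
  choose o ho hO using fun i => hindex _ (hC.orth _ ⟨i, rfl⟩)
  refine ⟨N, ⟨W, v, f, o, hmono, ?_, fun n hn => ?_, hv, hf, ho, hV, hF, hO⟩, rfl⟩
  · exact le_bot_iff.mp (hWi ▸ hmono.monotoneOn (Set.mem_Iic.mpr N.zero_le) hi i.zero_le)
  · exact top_le_iff.mp (hconst n hn ▸ hWj ▸ hmono.monotoneOn hj (Set.mem_Iic.mpr le_rfl) hj)

namespace IndexedChain

variable {N : ℕ} (K : X.IndexedChain N)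

theorem eq_of_W_eq {i j : ℕ} (hi : i ≤ N) (hj : j ≤ N) (h : K.W i = K.W j) : i = j :=
  K.strictMonoOn.injOn hi hj h

theorem le_of_W_le {i j : ℕ} (hi : i ≤ N) (hj : j ≤ N) (h : K.W i ≤ K.W j) : i ≤ j :=
  (K.strictMonoOn.le_iff_le hi hj).mp h

theorem monotone_W : Monotone K.W := fun i j hij => by
  rcases le_total j N with hj | hj
  · exact K.strictMonoOn.monotoneOn (hij.trans hj) hj hij
  · rw [K.W_of_le j hj]
    exact le_top

theorem v_zero : K.v 0 = 0 :=
  K.eq_of_W_eq (K.v_le 0) N.zero_le (by rw [← K.map_V, K.W_zero, Submodule.map_bot])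

theorem f_of_le {i : ℕ} (hi : N ≤ i) : K.f i = N :=
  K.eq_of_W_eq (K.f_le i) le_rfl
    (by rw [← K.comap_F, K.W_of_le i hi, K.W_of_le N le_rfl, Submodule.comap_top])

theorem v_of_le {i : ℕ} (hi : N ≤ i) : K.v i = K.v N :=
  K.eq_of_W_eq (K.v_le i) (K.v_le N)
    (by rw [← K.map_V, ← K.map_V, K.W_of_le i hi, K.W_of_le N le_rfl])

theorem f_zero : K.f 0 = K.v N :=
  K.eq_of_W_eq (K.f_le 0) (K.v_le N)
    (by rw [← K.comap_F, ← K.map_V, K.W_zero, K.W_of_le N le_rfl, X.comap_F_bot])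

theorem monotone_v : Monotone K.v := fun i j hij =>
  K.le_of_W_le (K.v_le i) (K.v_le j)
    (by rw [← K.map_V, ← K.map_V]; exact Submodule.map_mono (K.monotone_W hij))

theorem monotone_f : Monotone K.f := fun i j hij =>
  K.le_of_W_le (K.f_le i) (K.f_le j)
    (by rw [← K.comap_F, ← K.comap_F]; exact Submodule.comap_mono (K.monotone_W hij))

theorem strictMonoOn_v_add_f : StrictMonoOn (fun i => K.v i + K.f i) (Set.Iic N) := by
  intro i hi j hj hij
  have hv := K.monotone_v hij.le
  have hf := K.monotone_f hij.le
  have hW := K.strictMonoOn hi hj hij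
  by_contra! hle
  refine hW.ne (X.eq_of_map_V_eq_of_comap_F_eq hW.le ?_ ?_)
  · rw [K.map_V, K.map_V, show K.v i = K.v j by lia]
  · rw [K.comap_F, K.comap_F, show K.f i = K.f j by lia]

theorem v_add_f {i : ℕ} (hi : i ≤ N) : K.v i + K.f i = K.v N + i := by
  have h := eq_add_of_strictMonoOn_Iic K.strictMonoOn_v_add_f
    (by rw [K.v_zero, K.f_zero, K.f_of_le le_rfl]; lia) hi
  simpa only [K.v_zero, K.f_zero, zero_add] using h

theorem o_eq {i : ℕ} (hi : i ≤ N) : K.o i = N - i := by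
  have hmono : StrictMonoOn (fun i => N - K.o i) (Set.Iic N) := fun i hi j hj hij => by
    have hW := K.strictMonoOn hi hj hij
    have hlt : K.o j < K.o i := by
      by_contra! hle
      refine hW.not_ge (X.orth_le_orth_iff.mp ?_)
      rw [K.orth, K.orth]
      exact K.monotone_W hle
    have := K.o_le i
    dsimp only
    lia
  have h := eq_add_of_strictMonoOn_Iic hmono (by lia) hi
  have h₀ : K.o 0 = N :=
    K.eq_of_W_eq (K.o_le 0) le_rfl (by rw [← K.orth, K.W_zero, X.orth_bot, K.W_of_le N le_rfl])
  have := K.o_le i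
  lia

theorem v_sub_add {i : ℕ} (hi : i ≤ N) : K.v (N - i) + i = K.v N + K.v i := by
  have hf : K.f (N - i) = N - K.v i := K.eq_of_W_eq (K.f_le _) (Nat.sub_le _ _) (by
    rw [← K.comap_F, ← K.o_eq hi, ← K.orth, ← X.orth_map_V, K.map_V, K.orth,
      K.o_eq (K.v_le i)])
  have := K.v_add_f (Nat.sub_le N i)
  have := K.v_le i
  lia

theorem two_mul_v : 2 * K.v N = N := by
  have := K.v_sub_add le_rfl
  rw [Nat.sub_self, K.v_zero] at this
  lia

theorem isFinalSequence : IsFinalSequence (K.v N) K.v where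
  zero := K.v_zero
  step i := by
    have hv := K.monotone_v i.le_succ
    have hf := K.monotone_f i.le_succ
    rcases lt_or_ge i N with hi | hi
    · have h₁ := K.v_add_f hi.le
      have h₂ := K.v_add_f (i := i + 1) hi
      lia
    · rw [K.v_of_le hi, K.v_of_le (hi.trans i.le_succ)]
      exact .inl rfl
  symm i hi := by
    rw [K.two_mul_v] at hi ⊢
    exact K.v_sub_add hi
  eq_of_le i hi := K.v_of_le (K.two_mul_v ▸ hi)

/-- The flag with the index maps computed: `f i = v N + i - v i` and `o i = N - i`. -/
def toStableFlag : X.StableFlag (K.v N) where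
  W := K.W
  v := K.v
  strictMonoOn := by rw [K.two_mul_v]; exact K.strictMonoOn
  W_zero := K.W_zero
  W_of_le := by rw [K.two_mul_v]; exact K.W_of_le
  isFinalSequence := K.isFinalSequence
  map_V := K.map_V
  comap_F i := by
    rw [K.comap_F]
    rcases le_total i N with hi | hi
    · rw [← K.v_add_f hi, Nat.add_sub_cancel_left]
    · rw [K.f_of_le hi, K.v_of_le hi, Nat.add_sub_cancel_left, K.W_of_le N le_rfl, K.W_of_le i hi]
  orth i := by
    rw [K.two_mul_v]
    rcases le_total i N with hi | hi
    · rw [K.orth, K.o_eq hi]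
    · rw [K.W_of_le i hi, X.orth_top, Nat.sub_eq_zero_of_le hi, K.W_zero]

end IndexedChain

theorem IsStableChain.exists_stableFlag {C : Set (Submodule k X.M)} (hC : X.IsStableChain C) :
    ∃ (l : ℕ) (Γ : X.StableFlag l), Set.range Γ.W = C := by
  obtain ⟨N, K, hK⟩ := hC.exists_indexedChain
  exact ⟨K.v N, K.toStableFlag, hK⟩

end PolarizedBT1Space

/-! ### The canonical filtration -/

namespace PolarizedBT1Space

variable {p : ℕ} [Fact p.Prime] {k : Type} [Field k] [CharP k p] [PerfectRing k p] {g : ℕ}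
variable {X : PolarizedBT1Space p k g}

/-- The members of the canonical filtration: the subspaces obtained from `⊥` and `⊤` by applying
`V` and `F⁻¹` repeatedly. -/
inductive IsCanonical (X : PolarizedBT1Space p k g) : Submodule k X.M → Prop
  | bot : IsCanonical X ⊥
  | top : IsCanonical X ⊤
  | map_V {A : Submodule k X.M} : IsCanonical X A → IsCanonical X (A.map X.V)
  | comap_F {A : Submodule k X.M} : IsCanonical X A → IsCanonical X (A.comap X.F)

theorem IsCanonical.le_total {A D : Submodule k X.M} (hA : X.IsCanonical A)
    (hD : X.IsCanonical D) : A ≤ D ∨ D ≤ A := by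
  induction hA generalizing D with
  | bot => exact .inl bot_le
  | top => exact .inr le_top
  | map_V _ ih =>
    cases hD with
    | bot => exact .inr bot_le
    | top => exact .inl le_top
    | map_V hD => exact (ih hD).imp Submodule.map_mono Submodule.map_mono
    | comap_F => exact .inl (X.map_V_le_comap_F _ _)
  | comap_F _ ih =>
    cases hD with
    | bot => exact .inr bot_le
    | top => exact .inl le_top
    | map_V => exact .inr (X.map_V_le_comap_F _ _)
    | comap_F hD => exact (ih hD).imp Submodule.comap_mono Submodule.comap_mono

theorem IsCanonical.orth {A : Submodule k X.M} (hA : X.IsCanonical A) :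
    X.IsCanonical (X.orth A) := by
  induction hA with
  | bot => exact X.orth_bot ▸ .top
  | top => exact X.orth_top ▸ .bot
  | map_V _ ih => exact X.orth_map_V _ ▸ ih.comap_F
  | comap_F _ ih => exact X.orth_comap_F _ ▸ ih.map_V

theorem isStableChain_isCanonical (X : PolarizedBT1Space p k g) :
    X.IsStableChain {A | X.IsCanonical A} where
  isChain _ hA _ hD _ := hA.le_total hD
  bot_mem := .bot
  map_V _ hA := hA.map_V
  comap_F _ hA := hA.comap_F
  orth _ hA := hA.orth

theorem IsStableChain.mem_of_isCanonical {C : Set (Submodule k X.M)} (hC : X.IsStableChain C)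
    {A : Submodule k X.M} (hA : X.IsCanonical A) : A ∈ C := by
  induction hA with
  | bot => exact hC.bot_mem
  | top => exact X.orth_bot ▸ hC.orth _ hC.bot_mem
  | map_V _ ih => exact hC.map_V _ ih
  | comap_F _ ih => exact hC.comap_F _ ih

namespace StableFlag

variable {l : ℕ} (Γ : X.StableFlag l)

theorem monotone_W : Monotone Γ.W := fun i j hij => by
  rcases le_total j (2 * l) with hj | hj
  · exact Γ.strictMonoOn.monotoneOn (hij.trans hj) hj hij
  · rw [Γ.W_of_le j hj]
    exact le_top

theorem isStableChain_range : X.IsStableChain (Set.range Γ.W) where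
  isChain := Γ.monotone_W.isChain_range
  bot_mem := ⟨0, Γ.W_zero⟩
  map_V := Set.forall_mem_range.mpr fun i => ⟨_, (Γ.map_V i).symm⟩
  comap_F := Set.forall_mem_range.mpr fun i => ⟨_, (Γ.comap_F i).symm⟩
  orth := Set.forall_mem_range.mpr fun i => ⟨_, (Γ.orth i).symm⟩

theorem ncard_range : (Set.range Γ.W).ncard = 2 * l + 1 := by
  have hrange : Set.range Γ.W = Γ.W '' Set.Iic (2 * l) := by
    refine (Set.range_subset_iff.mpr fun i => ?_).antisymm (Set.image_subset_range _ _)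
    rcases le_total i (2 * l) with hi | hi
    · exact ⟨i, hi, rfl⟩
    · exact ⟨2 * l, Set.mem_Iic.mpr le_rfl, by rw [Γ.W_of_le _ le_rfl, Γ.W_of_le i hi]⟩
  rw [hrange, Γ.strictMonoOn.injOn.ncard_image, Set.ncard_eq_toFinset_card',
    Set.toFinset_Iic, Nat.card_Iic]

theorem strictMonoOn_finrank : StrictMonoOn (fun i => finrank k (Γ.W i)) (Set.Iic (2 * l)) :=
  fun _ hi _ hj hij => Submodule.finrank_lt_finrank_of_lt (Γ.strictMonoOn hi hj hij)

theorem finrank_W_zero : finrank k (Γ.W 0) = 0 := by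
  rw [Γ.W_zero, finrank_bot]

theorem finrank_W_two_mul : finrank k (Γ.W (2 * l)) = 2 * g := by
  rw [Γ.W_of_le _ le_rfl, finrank_top, X.hdim]

theorem le_genus (Γ : X.StableFlag l) : l ≤ g := by
  have := add_sub_le_of_strictMonoOn_Iic Γ.strictMonoOn_finrank (2 * l).zero_le le_rfl
  rw [Γ.finrank_W_zero, Γ.finrank_W_two_mul] at this
  lia

theorem finrank_W (Γ : X.StableFlag g) {i : ℕ} (hi : i ≤ 2 * g) : finrank k (Γ.W i) = i := by
  have h := eq_add_of_strictMonoOn_Iic Γ.strictMonoOn_finrank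
    (by rw [Γ.finrank_W_zero, Γ.finrank_W_two_mul, zero_add]) hi
  rwa [Γ.finrank_W_zero, zero_add] at h

theorem exists_finrank_add_one_lt (hl : l < g) :
    ∃ b : Fin (2 * l), finrank k (Γ.W b) + 1 < finrank k (Γ.W (b + 1)) := by
  by_contra! hle
  have hrank : ∀ i ≤ 2 * l, finrank k (Γ.W i) ≤ i := fun i => by
    induction i with
    | zero => exact fun _ => Γ.finrank_W_zero.le
    | succ i ih => exact fun hi => (hle ⟨i, hi⟩).trans (Nat.succ_le_succ (ih (by lia)))
  have := hrank (2 * l) le_rfl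
  rw [Γ.finrank_W_two_mul] at this
  lia

/-- The permutation of the graded pieces `W (b + 1) / W b` induced by `F` and `V`. -/
noncomputable abbrev perm : Equiv.Perm (Fin (2 * l)) := Γ.isFinalSequence.perm

theorem W_le_succ (b : ℕ) : Γ.W b ≤ Γ.W (b + 1) := Γ.monotone_W b.le_succ

theorem W_lt_succ (b : Fin (2 * l)) : Γ.W b < Γ.W (b + 1) :=
  Γ.strictMonoOn b.2.le b.2 (b : ℕ).lt_succ_self

theorem orth_rev (b : Fin (2 * l)) : X.orth (Γ.W b.rev) = Γ.W (b + 1) := by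
  rw [Γ.orth, Fin.val_rev, show 2 * l - (2 * l - (b + 1)) = b + 1 by lia]

section Jump

variable {Γ} {b : Fin (2 * l)}

theorem map_V_of_jumpsAt (h : JumpsAt Γ.v b) : (Γ.W b).map X.V = Γ.W (Γ.perm b) := by
  rw [Γ.map_V, Γ.isFinalSequence.perm_of_jumpsAt h]

theorem map_V_succ_of_jumpsAt (h : JumpsAt Γ.v b) :
    (Γ.W (b + 1)).map X.V = Γ.W (Γ.perm b + 1) := by
  rw [Γ.map_V, Γ.isFinalSequence.succ_of_jumpsAt h]

theorem comap_F_succ_of_jumpsAt (h : JumpsAt Γ.v b) :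
    (Γ.W (b + 1)).comap X.F = (Γ.W b).comap X.F := by
  rw [JumpsAt] at h
  rw [Γ.comap_F, Γ.comap_F, h, show l + (b + 1) - (Γ.v b + 1) = l + b - Γ.v b by lia]

theorem comap_F_of_not_jumpsAt (h : ¬ JumpsAt Γ.v b) : (Γ.W b).comap X.F = Γ.W (Γ.perm b) := by
  rw [Γ.comap_F, Γ.isFinalSequence.perm_of_not_jumpsAt h]

theorem comap_F_succ_of_not_jumpsAt (h : ¬ JumpsAt Γ.v b) :
    (Γ.W (b + 1)).comap X.F = Γ.W (Γ.perm b + 1) := by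
  rw [Γ.comap_F, Γ.isFinalSequence.succ_of_not_jumpsAt h]

theorem map_V_succ_of_not_jumpsAt (h : ¬ JumpsAt Γ.v b) :
    (Γ.W (b + 1)).map X.V = (Γ.W b).map X.V := by
  rw [Γ.map_V, Γ.map_V, Γ.isFinalSequence.succ_eq_of_not_jumpsAt h]

end Jump

end StableFlag

end PolarizedBT1Space

/-! ### Lifting through `F` and `V` -/

theorem exists_semilinear_section {k M M' : Type*} [Field k] [AddCommGroup M] [Module k M]
    [AddCommGroup M'] [Module k M'] [FiniteDimensional k M'] {σ τ : k →+* k} [RingHomSurjective τ]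
    (hτσ : ∀ a, τ (σ a) = a) (V : M →ₛₗ[τ] M') (W : Submodule k M) :
    ∃ S : M' →ₛₗ[σ] M, ∀ y ∈ W.map V, S y ∈ W ∧ V (S y) = y := by
  set b := finBasis k (W.map V)
  choose w hwW hwb using fun i => (b i).2
  obtain ⟨proj, hproj⟩ := LinearMap.exists_leftInverse_of_injective (W.map V).subtype
    (Submodule.ker_subtype _)
  let S : M' →ₛₗ[σ] M :=
    { toFun y := ∑ i, σ (b.repr (proj y) i) • w i
      map_add' x y := by simp only [map_add, Finsupp.add_apply, add_smul, Finset.sum_add_distrib]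
      map_smul' c y := by
        simp only [map_smul, Finsupp.smul_apply, smul_eq_mul, map_mul, mul_smul, Finset.smul_sum] }
  have hS (y : M') : S y = ∑ i, σ (b.repr (proj y) i) • w i := rfl
  refine ⟨S, fun y hy => ⟨hS y ▸ W.sum_mem fun i _ => W.smul_mem _ (hwW i), ?_⟩⟩
  have hy' : proj y = ⟨y, hy⟩ := LinearMap.congr_fun hproj ⟨y, hy⟩
  calc V (S y) = ∑ i, b.repr ⟨y, hy⟩ i • (b i : M') := by
        simp only [hS, map_sum, map_smulₛₗ, hτσ, hwb, hy']
    _ = y := by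
        simpa only [map_sum, map_smul, Submodule.subtype_apply] using
          congrArg (W.map V).subtype (b.sum_repr ⟨y, hy⟩)

theorem finrank_sup_span_singleton_le {k M : Type*} [Field k] [AddCommGroup M] [Module k M]
    [FiniteDimensional k M] (A : Submodule k M) (x : M) :
    finrank k (A ⊔ Submodule.span k {x} : Submodule k M) ≤ finrank k A + 1 :=
  (Submodule.finrank_add_le_finrank_add_finrank _ _).trans
    (Nat.add_le_add_left ((finrank_span_le_card _).trans (by simp)) _)

namespace PolarizedBT1Space

variable {p : ℕ} [Fact p.Prime] {k : Type} [Field k] [CharP k p] [PerfectRing k p] {g : ℕ}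
variable {X : PolarizedBT1Space p k g} {l : ℕ}

/-- `y` is obtained from `x` by dividing by `V` at the jumps of the final sequence and by applying
`F` elsewhere. A family with `IsLift hv x x` behaves under `F` and `V` like a standard basis. -/
structure IsLift {v : ℕ → ℕ} (hv : IsFinalSequence l v) (x y : Fin (2 * l) → X.M) : Prop where
  V_apply : ∀ {i : Fin (2 * l)}, JumpsAt v i → X.V (y i) = x (hv.perm i)
  apply_eq : ∀ {i : Fin (2 * l)}, ¬ JumpsAt v i → y i = X.F (x (hv.perm i))

namespace IsLift

variable {v : ℕ → ℕ} {hv : IsFinalSequence l v} {x x' y y' : Fin (2 * l) → X.M}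

theorem add (hx : IsLift hv x x') (hy : IsLift hv y y') : IsLift hv (x + y) (x' + y') where
  V_apply h := by simp only [Pi.add_apply, map_add, hx.V_apply h, hy.V_apply h]
  apply_eq h := by simp only [Pi.add_apply, map_add, hx.apply_eq h, hy.apply_eq h]

theorem sub (hx : IsLift hv x x') (hy : IsLift hv y y') : IsLift hv (x - y) (x' - y') where
  V_apply h := by simp only [Pi.sub_apply, map_sub, hx.V_apply h, hy.V_apply h]
  apply_eq h := by simp only [Pi.sub_apply, map_sub, hx.apply_eq h, hy.apply_eq h]

theorem smul (hx : IsLift hv x x') {A A' : Fin (2 * l) → k} (hA : ∀ i, A' i = A (hv.perm i) ^ p) :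
    IsLift hv (A • x) (A' • x') where
  V_apply {i} h := by
    simp only [Pi.smul_apply', map_smulₛₗ, hx.V_apply h, hA i, RingHom.coe_coe,
      frobeniusEquiv_symm_pow]
  apply_eq {i} h := by
    simp only [Pi.smul_apply', map_smulₛₗ, ← hx.apply_eq h, hA i, frobenius_def]

theorem B_eq_pow (hx : IsLift hv x x') (hy : IsLift hv y y') {i j : Fin (2 * l)}
    (hij : JumpsAt v i ↔ ¬ JumpsAt v j) :
    X.B (x' i) (y' j) = X.B (x (hv.perm i)) (y (hv.perm j)) ^ p := by
  by_cases hi : JumpsAt v i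
  · rw [hy.apply_eq (hij.mp hi), ← X.B_V_pow, hx.V_apply hi]
  · rw [hx.apply_eq hi, X.hcompat, hy.V_apply (not_not.mp (hij.not.mp hi))]

theorem B_rev_eq_pow (hx : IsLift hv x x') (hy : IsLift hv y y') (i : Fin (2 * l)) :
    X.B (x' i) (y' i.rev) = X.B (x (hv.perm i)) (y (hv.perm i).rev) ^ p := by
  rw [hx.B_eq_pow hy (by rw [hv.jumpsAt_rev_iff, not_not]), hv.perm_rev]

end IsLift

namespace StableFlag

variable (Γ : X.StableFlag l)

theorem apply_mem_W_iff_of_isLift {Γ : X.StableFlag l} {x y : Fin (2 * l) → X.M}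
    (h : IsLift Γ.isFinalSequence x y) {b : Fin (2 * l)} (hy : y b ∈ Γ.W (b + 1)) :
    y b ∈ Γ.W b ↔ x (Γ.perm b) ∈ Γ.W (Γ.perm b) := by
  by_cases hb : JumpsAt Γ.v b
  · rw [← h.V_apply hb, ← map_V_of_jumpsAt hb]
    exact ⟨fun hyb => ⟨_, hyb, rfl⟩,
      X.mem_of_V_mem_map (Γ.W_le_succ b) (comap_F_succ_of_jumpsAt hb).symm hy⟩
  · rw [h.apply_eq hb, ← Submodule.mem_comap, comap_F_of_not_jumpsAt hb]

/-- Families with one vector in each `W (b + 1)`. -/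
def upper : Submodule k (Fin (2 * l) → X.M) := Submodule.pi Set.univ fun b => Γ.W (b + 1)

/-- Families with one vector in each `W b`. -/
def lower : Submodule k (Fin (2 * l) → X.M) := Submodule.pi Set.univ fun b => Γ.W b

variable {Γ}

theorem mem_upper {x : Fin (2 * l) → X.M} : x ∈ Γ.upper ↔ ∀ b : Fin (2 * l), x b ∈ Γ.W (b + 1) :=
  Set.mem_univ_pi

theorem mem_lower {x : Fin (2 * l) → X.M} : x ∈ Γ.lower ↔ ∀ b : Fin (2 * l), x b ∈ Γ.W b :=
  Set.mem_univ_pi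

theorem lower_le_upper : Γ.lower ≤ Γ.upper :=
  Submodule.pi_mono fun b _ => Γ.W_le_succ b

theorem mem_lower_iff_of_isLift {x y : Fin (2 * l) → X.M} (h : IsLift Γ.isFinalSequence x y)
    (hy : y ∈ Γ.upper) : y ∈ Γ.lower ↔ x ∈ Γ.lower := by
  rw [mem_lower, mem_lower, ← Γ.perm.forall_congr_right (q := fun b : Fin (2 * l) => x b ∈ Γ.W b)]
  exact forall_congr' fun b => apply_mem_W_iff_of_isLift h (mem_upper.mp hy b)

variable (Γ)

theorem exists_isLift : ∃ f : (Fin (2 * l) → X.M) →ₛₗ[frobenius k p] (Fin (2 * l) → X.M),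
    ∀ x ∈ Γ.upper, f x ∈ Γ.upper ∧ IsLift Γ.isFinalSequence x (f x) := by
  choose S hS using exists_semilinear_section (σ := frobenius k p)
    (τ := ((frobeniusEquiv k p).symm : k →+* k)) (frobeniusEquiv_symm_pow k p) X.V
  let G (b : Fin (2 * l)) : X.M →ₛₗ[frobenius k p] X.M :=
    if JumpsAt Γ.v b then S (Γ.W (b + 1)) else X.F
  have hG_jump {b : Fin (2 * l)} (hb : JumpsAt Γ.v b) : G b = S (Γ.W (b + 1)) := if_pos hb
  have hG {b : Fin (2 * l)} (hb : ¬ JumpsAt Γ.v b) : G b = X.F := if_neg hb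
  have hS_jump {b : Fin (2 * l)} (hb : JumpsAt Γ.v b) {y : X.M} (hy : y ∈ Γ.W (Γ.perm b + 1)) :=
    hS (Γ.W (b + 1)) y ((map_V_succ_of_jumpsAt hb).symm ▸ hy)
  let f : (Fin (2 * l) → X.M) →ₛₗ[frobenius k p] (Fin (2 * l) → X.M) :=
    { toFun x b := G b (x (Γ.perm b))
      map_add' x y := funext fun b => map_add (G b) _ _
      map_smul' c x := funext fun b => map_smulₛₗ (G b) _ _ }
  have hf (x : Fin (2 * l) → X.M) (b : Fin (2 * l)) : f x b = G b (x (Γ.perm b)) := rfl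
  refine ⟨f, fun x hx => ⟨mem_upper.mpr fun b => ?_, fun {b} hb => ?_, fun {b} hb => ?_⟩⟩ <;>
    rw [hf]
  · by_cases hb : JumpsAt Γ.v b
    · rw [hG_jump hb]
      exact (hS_jump hb (mem_upper.mp hx _)).1
    · rw [hG hb, ← Submodule.mem_comap, comap_F_succ_of_not_jumpsAt hb]
      exact mem_upper.mp hx _
  · rw [hG_jump hb]
    exact (hS_jump hb (mem_upper.mp hx _)).2
  · rw [hG hb]

variable [IsAlgClosed k]

theorem exists_isLift_self_sub_mem_lower {y y' : Fin (2 * l) → X.M} (hy : y ∈ Γ.upper)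
    (hy' : y' ∈ Γ.upper) (hyy' : IsLift Γ.isFinalSequence y y') (hsub : y' - y ∈ Γ.lower) :
    ∃ x, IsLift Γ.isFinalSequence x x ∧ x - y ∈ Γ.lower := by
  obtain ⟨f, hf⟩ := Γ.exists_isLift
  have hf_lower : Set.MapsTo f Γ.lower Γ.lower := fun x hx =>
    (mem_lower_iff_of_isLift (hf x (lower_le_upper hx)).2 (hf x (lower_le_upper hx)).1).mpr hx
  have hfy : f y - y' ∈ Γ.lower :=
    (mem_lower_iff_of_isLift ((hf y hy).2.sub hyy') (sub_mem (hf y hy).1 hy')).mpr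
      (by rw [sub_self]; exact zero_mem _)
  obtain ⟨u, hu, hufu⟩ := exists_sub_map_eq hf_lower
    (show f y - y ∈ Γ.lower from sub_add_sub_cancel (f y) y' y ▸ add_mem hfy hsub)
  have hfixed : f (y + u) = y + u := by
    rw [map_add, sub_eq_sub_iff_add_eq_add.mp hufu.symm, add_comm]
  have hlift := (hf _ (add_mem hy (lower_le_upper hu))).2
  rw [hfixed] at hlift
  exact ⟨y + u, hlift, by rwa [add_sub_cancel_left]⟩

theorem exists_isLift_self_apply_notMem {b : Fin (2 * l)} {H : Submodule k X.M}
    (hWH : Γ.W b ≤ H) (hH : ¬ Γ.W (b + 1) ≤ H) :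
    ∃ x ∈ Γ.upper, IsLift Γ.isFinalSequence x x ∧ x b ∉ H := by
  obtain ⟨f, hf⟩ := Γ.exists_isLift
  by_contra! hc
  refine hH fun w hw => ?_
  have hle := le_sup_span_fixed (f := f) (fun x hx => (hf x hx).1) Γ.lower_le_upper
    (fun x hx => (mem_lower_iff_of_isLift (hf x (lower_le_upper hx)).2
      (hf x (lower_le_upper hx)).1).mpr hx)
    (fun x hx hfx => (mem_lower_iff_of_isLift (hf x hx).2 (hf x hx).1).mp hfx)
  have hfixed : Γ.lower ⊔ Submodule.span k {x | x ∈ Γ.upper ∧ f x = x} ≤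
      H.comap (LinearMap.proj b) :=
    sup_le (fun x hx => hWH (mem_lower.mp hx b)) (Submodule.span_le.mpr fun x hx =>
      hc x hx.1 (by simpa only [hx.2] using (hf x hx.1).2))
  have hsingle : Pi.single b w ∈ Γ.upper := mem_upper.mpr fun c => by
    by_cases hcb : c = b
    · subst hcb
      simpa using hw
    · simp [hcb]
  simpa using hfixed (hle hsingle)

end StableFlag

end PolarizedBT1Space

/-! ### Refinement to a full flag -/

theorem isChain_range_union_iUnion {α : Type*} [PartialOrder α] {N : ℕ} {W : ℕ → α}
    (hW : Monotone W) {E : Fin N → Set α} (hE : ∀ b, IsChain (· ≤ ·) (E b))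
    (hWE : ∀ b : Fin N, ∀ A ∈ E b, W b ≤ A ∧ A ≤ W (b + 1)) :
    IsChain (· ≤ ·) (Set.range W ∪ ⋃ b, E b) := by
  have hcomp : ∀ i, ∀ A ∈ ⋃ b, E b, W i ≤ A ∨ A ≤ W i := fun i A hA => by
    obtain ⟨b, hA⟩ := Set.mem_iUnion.mp hA
    rcases le_or_gt i b with h | h
    · exact .inl ((hW h).trans (hWE b A hA).1)
    · exact .inr ((hWE b A hA).2.trans (hW h))
  rintro A (⟨i, rfl⟩ | hA) D (⟨j, rfl⟩ | hD) hne
  · exact (le_total i j).imp (fun h => hW h) (fun h => hW h)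
  · exact hcomp i D hD
  · exact (hcomp j A hA).symm
  · obtain ⟨b, hA⟩ := Set.mem_iUnion.mp hA
    obtain ⟨c, hD⟩ := Set.mem_iUnion.mp hD
    rcases lt_trichotomy b c with h | rfl | h
    · exact .inl ((hWE b A hA).2.trans ((hW h).trans (hWE c D hD).1))
    · exact hE b hA hD hne
    · exact .inr ((hWE c D hD).2.trans ((hW h).trans (hWE b A hA).1))

theorem smul_add_smul_notMem {k M : Type*} [Field k] [AddCommGroup M] [Module k M]
    {W : Submodule k M} {x y : M} (hx : x ∉ W) (hy : y ∉ W ⊔ Submodule.span k {x}) {a d : k}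
    (had : a ≠ 0 ∨ d ≠ 0) : a • x + d • y ∉ W := fun hmem => by
  have hd : d = 0 := by
    by_contra hd
    refine hy ((Submodule.smul_mem_iff _ hd).mp ?_)
    rw [← add_sub_cancel_left (a • x) (d • y)]
    exact sub_mem (Submodule.mem_sup_left hmem)
      (Submodule.mem_sup_right (Submodule.smul_mem _ a (Submodule.mem_span_singleton_self x)))
  rw [hd, zero_smul, add_zero] at hmem
  exact hx ((Submodule.smul_mem_iff _ (had.resolve_right (not_not.mpr hd))).mp hmem)

namespace PolarizedBT1Space

variable {p : ℕ} [Fact p.Prime] {k : Type} [Field k] [CharP k p] [PerfectRing k p] {g : ℕ}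
variable {X : PolarizedBT1Space p k g} {l : ℕ}

namespace StableFlag

theorem exists_isotropic_isLift_self [IsAlgClosed k] (Γ : X.StableFlag l) {b : Fin (2 * l)}
    (hb : finrank k (Γ.W b) + 1 < finrank k (Γ.W (b + 1))) :
    ∃ z ∈ Γ.upper, IsLift Γ.isFinalSequence z z ∧ (∀ c, X.B (z c) (z c.rev) = 0) ∧
      z b ∉ Γ.W b := by
  obtain ⟨x, hx, hxx, hxb⟩ := Γ.exists_isLift_self_apply_notMem le_rfl (Γ.W_lt_succ b).not_ge
  obtain ⟨y, hy, hyy, hyb⟩ := Γ.exists_isLift_self_apply_notMem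
    (H := Γ.W b ⊔ Submodule.span k {x b}) le_sup_left fun hle =>
      (hb.trans_le (Submodule.finrank_mono hle)).not_ge (finrank_sup_span_singleton_le _ _)
  obtain ⟨A, D, hA, hD, hAD, hzero⟩ := exists_isotropic_combination (p := p)
    (h := fun i : Fin (2 * l) => JumpsAt Γ.v i) Fin.rev_rev
    Γ.isFinalSequence.perm_rev Γ.isFinalSequence.jumpsAt_rev_iff (hxx.B_rev_eq_pow hxx)
    (hxx.B_rev_eq_pow hyy) (hyy.B_rev_eq_pow hyy)
    (fun c => by rw [Fin.rev_rev, X.B_swap]) (fun c => by rw [Fin.rev_rev, X.B_swap])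
  refine ⟨A • x + D • y, ?_, (hxx.smul hA).add (hyy.smul hD), fun c => ?_,
    smul_add_smul_notMem hxb hyb (hAD b)⟩
  · exact mem_upper.mpr fun c => add_mem (Submodule.smul_mem _ _ (mem_upper.mp hx c))
      (Submodule.smul_mem _ _ (mem_upper.mp hy c))
  · rw [← hzero c]
    simp only [Pi.add_apply, Pi.smul_apply', map_add, map_smul, LinearMap.add_apply,
      LinearMap.smul_apply, smul_eq_mul, Fin.rev_rev]
    rw [X.B_swap (y c) (x c.rev)]
    ring

section Refinement

variable {Γ : X.StableFlag l} {z : Fin (2 * l) → X.M}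

/-- The subspace inserted between `W b` and `W (b + 1)` by a family `z` of vectors. -/
def inserted (Γ : X.StableFlag l) (z : Fin (2 * l) → X.M) (b : Fin (2 * l)) : Submodule k X.M :=
  Γ.W b ⊔ Submodule.span k {z b}

theorem W_le_inserted (b : Fin (2 * l)) : Γ.W b ≤ Γ.inserted z b := le_sup_left

theorem inserted_le (hz : z ∈ Γ.upper) (b : Fin (2 * l)) : Γ.inserted z b ≤ Γ.W (b + 1) :=
  sup_le (Γ.W_le_succ b) ((Submodule.span_singleton_le_iff_mem _ _).mpr (mem_upper.mp hz b))

theorem map_V_inserted_of_jumpsAt (hzz : IsLift Γ.isFinalSequence z z) {b : Fin (2 * l)}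
    (hb : JumpsAt Γ.v b) : (Γ.inserted z b).map X.V = Γ.inserted z (Γ.perm b) := by
  rw [inserted, Submodule.map_sup, map_V_of_jumpsAt hb, Submodule.map_span, Set.image_singleton,
    hzz.V_apply hb, inserted]

theorem map_V_inserted_of_not_jumpsAt (hz : z ∈ Γ.upper) {b : Fin (2 * l)}
    (hb : ¬ JumpsAt Γ.v b) : (Γ.inserted z b).map X.V = (Γ.W b).map X.V :=
  ((Submodule.map_mono (inserted_le hz b)).trans_eq (map_V_succ_of_not_jumpsAt hb)).antisymm
    (Submodule.map_mono (W_le_inserted b))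

theorem comap_F_inserted_of_jumpsAt (hz : z ∈ Γ.upper) {b : Fin (2 * l)} (hb : JumpsAt Γ.v b) :
    (Γ.inserted z b).comap X.F = (Γ.W b).comap X.F :=
  ((Submodule.comap_mono (inserted_le hz b)).trans_eq (comap_F_succ_of_jumpsAt hb)).antisymm
    (Submodule.comap_mono (W_le_inserted b))

theorem comap_F_inserted_of_not_jumpsAt (hzz : IsLift Γ.isFinalSequence z z) {b : Fin (2 * l)}
    (hb : ¬ JumpsAt Γ.v b) : (Γ.inserted z b).comap X.F = Γ.inserted z (Γ.perm b) := by
  refine le_antisymm (fun y hy => ?_) (sup_le ?_ ?_)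
  · obtain ⟨w, hw, _, hc, hsum⟩ := Submodule.mem_sup.mp hy
    obtain ⟨a, rfl⟩ := Submodule.mem_span_singleton.mp hc
    obtain ⟨c, rfl⟩ := (frobeniusEquiv k p).surjective a
    have hmem : y - c • z (Γ.perm b) ∈ Γ.W (Γ.perm b) := by
      rw [← comap_F_of_not_jumpsAt hb, Submodule.mem_comap, map_sub, map_smulₛₗ,
        ← hzz.apply_eq hb, ← hsum]
      simpa using hw
    exact Submodule.mem_sup.mpr ⟨_, hmem, _, Submodule.smul_mem _ c
      (Submodule.mem_span_singleton_self _), sub_add_cancel _ _⟩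
  · rw [← comap_F_of_not_jumpsAt hb]
    exact Submodule.comap_mono (W_le_inserted b)
  · rw [Submodule.span_singleton_le_iff_mem, Submodule.mem_comap, ← hzz.apply_eq hb]
    exact Submodule.mem_sup_right (Submodule.mem_span_singleton_self _)

theorem inserted_le_orth_inserted_rev (hz : z ∈ Γ.upper) (hzB : ∀ b, X.B (z b) (z b.rev) = 0)
    (b : Fin (2 * l)) : Γ.inserted z b ≤ X.orth (Γ.inserted z b.rev) := by
  have hW : Γ.W b ≤ X.orth (Γ.inserted z b.rev) := by
    refine X.le_orth_comm.mp ((inserted_le hz b.rev).trans_eq ?_)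
    rw [← Γ.orth_rev, Fin.rev_rev]
  refine sup_le hW ((Submodule.span_singleton_le_iff_mem _ _).mpr ?_)
  rw [← Submodule.span_singleton_le_iff_mem, X.le_orth_comm]
  refine sup_le ?_ ((Submodule.span_singleton_le_iff_mem _ _).mpr (X.mem_orth.mpr ?_))
  · rw [X.le_orth_comm, Γ.orth_rev]
    exact (Submodule.span_singleton_le_iff_mem _ _).mpr (mem_upper.mp hz b)
  · intro w hw
    obtain ⟨a, rfl⟩ := Submodule.mem_span_singleton.mp hw
    rw [map_smul, LinearMap.smul_apply, hzB, smul_zero]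

/-- The members of the flag together with the inserted subspaces and their orthogonals. -/
def refinedChain (Γ : X.StableFlag l) (z : Fin (2 * l) → X.M) : Set (Submodule k X.M) :=
  Set.range Γ.W ∪ ⋃ b, {Γ.inserted z b, X.orth (Γ.inserted z b.rev)}

theorem W_mem_refinedChain (i : ℕ) : Γ.W i ∈ Γ.refinedChain z := .inl ⟨i, rfl⟩

theorem inserted_mem_refinedChain (b : Fin (2 * l)) : Γ.inserted z b ∈ Γ.refinedChain z :=
  .inr (Set.mem_iUnion.mpr ⟨b, .inl rfl⟩)

theorem isChain_refinedChain (hz : z ∈ Γ.upper) (hzB : ∀ b, X.B (z b) (z b.rev) = 0) :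
    IsChain (· ≤ ·) (Γ.refinedChain z) := by
  have hle := inserted_le_orth_inserted_rev hz hzB
  refine isChain_range_union_iUnion Γ.monotone_W (fun b => IsChain.pair (hle b)) fun b A hA => ?_
  rcases hA with rfl | rfl
  · exact ⟨W_le_inserted b, inserted_le hz b⟩
  · refine ⟨(W_le_inserted b).trans (hle b), ?_⟩
    rw [← Γ.orth_rev]
    exact X.orth_le_orth_iff.mpr (W_le_inserted b.rev)

theorem orth_mem_refinedChain {A : Submodule k X.M} (hA : A ∈ Γ.refinedChain z) :
    X.orth A ∈ Γ.refinedChain z := by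
  rcases hA with ⟨i, rfl⟩ | hA
  · exact Γ.orth i ▸ W_mem_refinedChain _
  obtain ⟨b, rfl | rfl⟩ := Set.mem_iUnion.mp hA
  · exact .inr (Set.mem_iUnion.mpr ⟨b.rev, .inr (by rw [Fin.rev_rev]; rfl)⟩)
  · exact (X.orth_orth _).symm ▸ inserted_mem_refinedChain _

theorem map_V_inserted_mem (hz : z ∈ Γ.upper) (hzz : IsLift Γ.isFinalSequence z z)
    (b : Fin (2 * l)) : (Γ.inserted z b).map X.V ∈ Γ.refinedChain z := by
  by_cases hb : JumpsAt Γ.v b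
  · exact map_V_inserted_of_jumpsAt hzz hb ▸ inserted_mem_refinedChain _
  · rw [map_V_inserted_of_not_jumpsAt hz hb, Γ.map_V]
    exact W_mem_refinedChain _

theorem comap_F_inserted_mem (hz : z ∈ Γ.upper) (hzz : IsLift Γ.isFinalSequence z z)
    (b : Fin (2 * l)) : (Γ.inserted z b).comap X.F ∈ Γ.refinedChain z := by
  by_cases hb : JumpsAt Γ.v b
  · rw [comap_F_inserted_of_jumpsAt hz hb, Γ.comap_F]
    exact W_mem_refinedChain _
  · exact comap_F_inserted_of_not_jumpsAt hzz hb ▸ inserted_mem_refinedChain _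

theorem isStableChain_refinedChain (hz : z ∈ Γ.upper) (hzz : IsLift Γ.isFinalSequence z z)
    (hzB : ∀ b, X.B (z b) (z b.rev) = 0) : X.IsStableChain (Γ.refinedChain z) where
  isChain := isChain_refinedChain hz hzB
  bot_mem := .inl ⟨0, Γ.W_zero⟩
  map_V A hA := by
    rcases hA with ⟨i, rfl⟩ | hA
    · exact Γ.map_V i ▸ W_mem_refinedChain _
    obtain ⟨b, rfl | rfl⟩ := Set.mem_iUnion.mp hA
    · exact map_V_inserted_mem hz hzz b
    · exact X.orth_comap_F _ ▸ orth_mem_refinedChain (comap_F_inserted_mem hz hzz _)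
  comap_F A hA := by
    rcases hA with ⟨i, rfl⟩ | hA
    · exact Γ.comap_F i ▸ W_mem_refinedChain _
    obtain ⟨b, rfl | rfl⟩ := Set.mem_iUnion.mp hA
    · exact comap_F_inserted_mem hz hzz b
    · exact X.orth_map_V _ ▸ orth_mem_refinedChain (map_V_inserted_mem hz hzz _)
  orth _ := orth_mem_refinedChain

theorem inserted_notMem_range {b : Fin (2 * l)} (hz : z ∈ Γ.upper) (hzb : z b ∉ Γ.W b)
    (hb : finrank k (Γ.W b) + 1 < finrank k (Γ.W (b + 1))) :
    Γ.inserted z b ∉ Set.range Γ.W := by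
  rintro ⟨i, hi⟩
  have hlt : Γ.W b < Γ.W i := hi ▸ (W_le_inserted b).lt_of_ne fun heq =>
    hzb (heq ▸ Submodule.mem_sup_right (Submodule.mem_span_singleton_self _))
  have hlt' : Γ.W i < Γ.W (b + 1) := hi ▸ (inserted_le hz b).lt_of_ne fun heq =>
    (heq ▸ hb).not_ge (finrank_sup_span_singleton_le _ _)
  have := Γ.monotone_W.reflect_lt hlt
  have := Γ.monotone_W.reflect_lt hlt'
  lia

end Refinement

variable [IsAlgClosed k]

theorem exists_refinement (Γ : X.StableFlag l) (hl : l < g) :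
    ∃ l' > l, Nonempty (X.StableFlag l') := by
  obtain ⟨b, hb⟩ := Γ.exists_finrank_add_one_lt hl
  obtain ⟨z, hz, hzz, hzB, hzb⟩ := Γ.exists_isotropic_isLift_self hb
  obtain ⟨l', Γ', hΓ'⟩ := (isStableChain_refinedChain hz hzz hzB).exists_stableFlag
  have hssub : Set.range Γ.W ⊂ Set.range Γ'.W := by
    rw [hΓ']
    exact Set.subset_union_left.ssubset_of_mem_notMem (inserted_mem_refinedChain b)
      (inserted_notMem_range hz hzb hb)
  have hcard := Set.ncard_lt_ncard hssub (X.finite_of_isChain Γ'.isStableChain_range.isChain)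
  rw [Γ.ncard_range, Γ'.ncard_range] at hcard
  exact ⟨l', by lia, ⟨Γ'⟩⟩

theorem nonempty_full {l : ℕ} (Γ : X.StableFlag l) : Nonempty (X.StableFlag g) := by
  rcases Γ.le_genus.eq_or_lt with rfl | hl
  · exact ⟨Γ⟩
  · obtain ⟨l', hl', ⟨Γ'⟩⟩ := Γ.exists_refinement hl
    have : g - l' < g - l := by lia
    exact Γ'.nonempty_full
termination_by g - l

end StableFlag

theorem nonempty_stableFlag [IsAlgClosed k] (X : PolarizedBT1Space p k g) :
    Nonempty (X.StableFlag g) := by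
  obtain ⟨l, Γ, -⟩ := X.isStableChain_isCanonical.exists_stableFlag
  exact Γ.nonempty_full

end PolarizedBT1Space

/-! ### Normalising the antidiagonal of the Gram matrix -/

/-- The antidiagonal Gram matrices compatible with the relations that `IsLift` imposes on a
basis. -/
structure IsStandardAntidiagonal (p : ℕ) {k : Type*} [Field k] {l : ℕ} {v : ℕ → ℕ}
    (hv : IsFinalSequence l v) (β : Fin (2 * l) → k) : Prop where
  ne_zero : ∀ i, β i ≠ 0
  eq_pow : ∀ i, β i = β (hv.perm i) ^ p
  rev : ∀ i, β i.rev = -β i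

theorem exists_isStandardAntidiagonal (p : ℕ) [Fact p.Prime] (k : Type*) [Field k] [CharP k p]
    [IsAlgClosed k] {l : ℕ} {v : ℕ → ℕ} (hv : IsFinalSequence l v) :
    ∃ β : Fin (2 * l) → k, IsStandardAntidiagonal p hv β := by
  obtain ⟨β, hβ₀, hβ, hβ_rev⟩ := exists_perm_pow_eq_neg (k := k) (p := p)
    (h := fun i : Fin (2 * l) => JumpsAt v i) hv.perm_rev hv.jumpsAt_rev_iff
  exact ⟨β, hβ₀, hβ, hβ_rev⟩

namespace PolarizedBT1Space

variable {p : ℕ} [Fact p.Prime] {k : Type} [Field k] [CharP k p] [PerfectRing k p] {g : ℕ}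
variable {X : PolarizedBT1Space p k g} {l : ℕ}

/-- An approximation to `IsStandard`: the Gram matrix of `x` has antidiagonal `β`, and its entry at
`(i, j)` vanishes if `(i, j)` is off the antidiagonal `i + j + 1 = 2l` and above its `K`-th
translate. -/
structure IsStandardUpTo {v : ℕ → ℕ} (hv : IsFinalSequence l v) (β : Fin (2 * l) → k) (K : ℕ)
    (x : Fin (2 * l) → X.M) : Prop where
  isLift : IsLift hv x x
  B_rev : ∀ i, X.B (x i) (x i.rev) = β i
  B_eq_zero : ∀ {i j : Fin (2 * l)}, j ≠ i.rev → (i : ℕ) + j + 1 < 2 * l + K → X.B (x i) (x j) = 0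

namespace StableFlag

section Blocks

theorem B_eq_zero_of_mem (Γ : X.StableFlag l) {i j : ℕ} (hij : i + j ≤ 2 * l) {u w : X.M}
    (hu : u ∈ Γ.W i) (hw : w ∈ Γ.W j) : X.B u w = 0 :=
  X.mem_orth.mp (Γ.orth i ▸ Γ.monotone_W (by lia) hw) u hu

theorem B_eq_of_sub_mem (Γ : X.StableFlag l) {i : Fin (2 * l)} {u u' w w' : X.M}
    (hu' : u' ∈ Γ.W (i + 1)) (hw : w ∈ Γ.W (i.rev + 1)) (hu : u - u' ∈ Γ.W i)
    (hww' : w - w' ∈ Γ.W i.rev) : X.B u w = X.B u' w' := by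
  have h₁ := Γ.B_eq_zero_of_mem (by rw [Fin.val_rev]; lia) hu hw
  have h₂ := Γ.B_eq_zero_of_mem (by rw [Fin.val_rev]; lia) hu' hww'
  rw [map_sub, LinearMap.sub_apply, sub_eq_zero] at h₁
  rw [map_sub, sub_eq_zero] at h₂
  rw [h₁, h₂]

variable (Γ : X.StableFlag g) {b : Fin (2 * g)} {a w : X.M}

theorem W_sup_span_singleton (ha : a ∈ Γ.W (b + 1)) (hab : a ∉ Γ.W b) :
    Γ.W b ⊔ Submodule.span k {a} = Γ.W (b + 1) := by
  refine Submodule.eq_of_le_of_finrank_le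
    (sup_le (Γ.W_le_succ b) ((Submodule.span_singleton_le_iff_mem _ _).mpr ha)) ?_
  rw [Γ.finrank_W b.2]
  refine (Γ.finrank_W b.2.le).symm.trans_lt (Submodule.finrank_lt_finrank_of_lt ?_)
  exact left_lt_sup.mpr fun h => hab (h (Submodule.mem_span_singleton_self a))

theorem exists_sub_smul_mem (ha : a ∈ Γ.W (b + 1)) (hab : a ∉ Γ.W b) (hw : w ∈ Γ.W (b + 1)) :
    ∃ c : k, w - c • a ∈ Γ.W b := by
  rw [← Γ.W_sup_span_singleton ha hab, Submodule.mem_sup] at hw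
  obtain ⟨u, hu, _, hc, rfl⟩ := hw
  obtain ⟨c, rfl⟩ := Submodule.mem_span_singleton.mp hc
  exact ⟨c, by rwa [add_sub_cancel_right]⟩

theorem B_ne_zero_of_notMem (ha : a ∈ Γ.W (b + 1)) (hab : a ∉ Γ.W b)
    (hw : w ∈ Γ.W (b.rev + 1)) (hwb : w ∉ Γ.W b.rev) : X.B a w ≠ 0 := fun h => by
  have horth : w ∈ X.orth (Γ.W (b + 1)) := X.mem_orth.mpr fun u hu => by
    obtain ⟨c, hc⟩ := Γ.exists_sub_smul_mem ha hab hu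
    have huw := Γ.B_eq_of_sub_mem (Submodule.smul_mem _ c ha) hw hc (sub_self w ▸ zero_mem _)
    rw [huw, map_smul, LinearMap.smul_apply, h, smul_zero]
  rw [Γ.orth, ← Fin.val_rev] at horth
  exact hwb horth

end Blocks

theorem exists_isLift_sub_smul_mem (Γ : X.StableFlag g) :
    ∃ (a a' : Fin (2 * g) → X.M) (R : Fin (2 * g) → k), a ∈ Γ.upper ∧ a' ∈ Γ.upper ∧
      IsLift Γ.isFinalSequence a a' ∧ (∀ b : Fin (2 * g), a' b - R b • a b ∈ Γ.W b) ∧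
      (∀ b, R b ≠ 0) ∧ ∀ b, X.B (a b) (a b.rev) ≠ 0 := by
  choose a ha hab using fun b => SetLike.exists_of_lt (Γ.W_lt_succ b)
  obtain ⟨f, hf⟩ := Γ.exists_isLift
  obtain ⟨hfa, hlift⟩ := hf a (mem_upper.mpr ha)
  choose R hR using fun b => Γ.exists_sub_smul_mem (ha b) (hab b) (mem_upper.mp hfa b)
  refine ⟨a, f a, R, mem_upper.mpr ha, hfa, hlift, hR, fun b h => ?_,
    fun b => Γ.B_ne_zero_of_notMem (ha _) (hab _) (ha _) (hab _)⟩
  have hmem := hR b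
  rw [h, zero_smul, sub_zero, apply_mem_W_iff_of_isLift hlift (mem_upper.mp hfa b)] at hmem
  exact hab _ hmem

variable [IsAlgClosed k] (Γ : X.StableFlag g) {β : Fin (2 * g) → k}

theorem exists_isLift_sub_mem_lower (hβ : IsStandardAntidiagonal p Γ.isFinalSequence β) :
    ∃ y ∈ Γ.upper, ∃ y' ∈ Γ.upper, IsLift Γ.isFinalSequence y y' ∧ y' - y ∈ Γ.lower ∧
      ∀ i, X.B (y i) (y i.rev) = β i := by
  obtain ⟨a, a', R, ha, ha', hlift, hR, hR₀, ha₀⟩ := Γ.exists_isLift_sub_smul_mem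
  set γ : Fin (2 * g) → k := fun i => X.B (a i) (a i.rev)
  have hγ_rev : ∀ i, γ i.rev = -γ i := fun i => by simp only [γ, Fin.rev_rev, X.B_swap (a i.rev)]
  have hγ : ∀ i, R i * R i.rev * γ i = γ (Γ.perm i) ^ p := fun i => by
    rw [← hlift.B_rev_eq_pow hlift i, Γ.B_eq_of_sub_mem
      (Submodule.smul_mem _ _ (mem_upper.mp ha i)) (mem_upper.mp ha' _) (hR i) (hR i.rev)]
    simp only [map_smul, LinearMap.smul_apply, smul_eq_mul, γ]
    ring
  have hβγ (i) : R i * R i.rev * (β (Γ.perm i) / γ (Γ.perm i)) ^ p = β i / γ i := by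
    rw [div_pow, ← hβ.eq_pow, ← hγ, mul_div_assoc',
      mul_div_mul_left _ _ (mul_ne_zero (hR₀ _) (hR₀ _))]
  obtain ⟨t, ht, ht_rev⟩ := exists_eq_mul_perm_pow (p := p) (π := Γ.perm)
    (h := fun i : Fin (2 * g) => JumpsAt Γ.v i) (μ := fun i => β i / γ i) Fin.rev_rev
    Γ.isFinalSequence.perm_rev Γ.isFinalSequence.jumpsAt_rev_iff hR₀
    (fun i => div_ne_zero (hβ.ne_zero i) (ha₀ i))
    (fun i => by rw [hβ.rev, hγ_rev, neg_div_neg_eq]) hβγ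
  refine ⟨t • a, mem_upper.mpr fun b => Submodule.smul_mem _ _ (mem_upper.mp ha b),
    (fun i => t (Γ.perm i) ^ p) • a', mem_upper.mpr fun b =>
      Submodule.smul_mem _ _ (mem_upper.mp ha' b), hlift.smul fun _ => rfl,
    mem_lower.mpr fun b => ?_, fun i => ?_⟩
  · have hsmul := Submodule.smul_mem _ (t (Γ.perm b) ^ p) (hR b)
    rwa [smul_sub, smul_smul, mul_comm _ (R b), ← ht] at hsmul
  · simp only [Pi.smul_apply', map_smul, LinearMap.smul_apply, smul_eq_mul]
    rw [← mul_assoc, mul_comm (t i.rev), ht_rev, div_mul_cancel₀ _ (ha₀ i)]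

theorem exists_isStandardUpTo_one (hβ : IsStandardAntidiagonal p Γ.isFinalSequence β) :
    ∃ x : Fin (2 * g) → X.M, IsStandardUpTo Γ.isFinalSequence β 1 x := by
  obtain ⟨y, hy, y', hy', hyy', hsub, hyβ⟩ := Γ.exists_isLift_sub_mem_lower hβ
  obtain ⟨x, hx, hxy⟩ := Γ.exists_isLift_self_sub_mem_lower hy hy' hyy' hsub
  have hx_upper : ∀ b : Fin (2 * g), x b ∈ Γ.W (b + 1) :=
    mem_upper.mp (sub_add_cancel x y ▸ add_mem (lower_le_upper hxy) hy)
  refine ⟨x, hx, fun i => ?_, fun {i j} hij hlt => ?_⟩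
  · rw [Γ.B_eq_of_sub_mem (mem_upper.mp hy i) (hx_upper i.rev) (mem_lower.mp hxy i)
      (mem_lower.mp hxy i.rev), hyβ]
  · refine Γ.B_eq_zero_of_mem ?_ (hx_upper i) (hx_upper j)
    rw [Ne, Fin.ext_iff, Fin.val_rev] at hij
    lia

end StableFlag

end PolarizedBT1Space

/-! ### Clearing the Gram matrix off the antidiagonal -/

section SkewDecomposition

variable {p : ℕ} {k : Type*} [Field k] {ι : Type*} {π : Equiv.Perm ι}
  {E : ι → ι → Prop}

open scoped Classical in
/-- The Frobenius-semilinear map replacing the entry of a matrix at each position `(i, j)` of `E`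
by the `p`-th power of the entry at `(π i, π j)`, and the remaining entries by `0`. -/
noncomputable def frobeniusPullback [Fact p.Prime] [CharP k p] (π : Equiv.Perm ι)
    (E : ι → ι → Prop) : (ι → ι → k) →ₛₗ[frobenius k p] (ι → ι → k) where
  toFun s i j := if E i j then s (π i) (π j) ^ p else 0
  map_add' s t := by
    funext i j
    by_cases hij : E i j <;> simp [hij, add_pow_char]
  map_smul' a s := by
    funext i j
    by_cases hij : E i j <;> simp [hij, mul_pow, frobenius_def]

/-- The symmetric matrices which vanish wherever `c` does. -/
def symmetricSupportedIn (c : ι → ι → k) : Submodule k (ι → ι → k) where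
  carrier := {s | (∀ i j, s i j = s j i) ∧ ∀ i j, c i j = 0 → s i j = 0}
  add_mem' hs ht := ⟨fun i j => congrArg₂ (· + ·) (hs.1 i j) (ht.1 i j),
    fun i j h => by simp [hs.2 i j h, ht.2 i j h]⟩
  zero_mem' := ⟨fun _ _ => rfl, fun _ _ _ => rfl⟩
  smul_mem' a _ hs := ⟨fun i j => congrArg (a • ·) (hs.1 i j), fun i j h => by simp [hs.2 i j h]⟩

variable [Fact p.Prime] [CharP k p]

theorem frobeniusPullback_of_mem {i j : ι} (h : E i j) (s : ι → ι → k) :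
    frobeniusPullback (p := p) π E s i j = s (π i) (π j) ^ p := if_pos h

theorem frobeniusPullback_of_notMem {i j : ι} (h : ¬ E i j) (s : ι → ι → k) :
    frobeniusPullback (p := p) π E s i j = 0 := if_neg h

theorem mapsTo_frobeniusPullback_symmetricSupportedIn {c : ι → ι → k}
    (hE : ∀ {i j}, E i j → E j i) (hc : ∀ {i j}, E i j → c i j = c (π i) (π j) ^ p) :
    Set.MapsTo (frobeniusPullback (p := p) (k := k) π E) (symmetricSupportedIn c)
      (symmetricSupportedIn c) := by
  have hp : p ≠ 0 := (Fact.out : p.Prime).ne_zero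
  refine fun s hs => ⟨fun i j => ?_, fun i j hij => ?_⟩
  · by_cases h : E i j
    · rw [frobeniusPullback_of_mem h, frobeniusPullback_of_mem (hE h), hs.1]
    · rw [frobeniusPullback_of_notMem h, frobeniusPullback_of_notMem fun h' => h (hE h')]
  · by_cases h : E i j
    · rw [frobeniusPullback_of_mem h, hs.2 _ _ ((pow_eq_zero_iff hp).mp (hc h ▸ hij)),
        zero_pow hp]
    · rw [frobeniusPullback_of_notMem h]

open scoped Classical in
theorem ite_sub_pow_mem_symmetricSupportedIn {c u : ι → ι → k} (hE : ∀ {i j}, E i j → E j i)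
    (hc : ∀ {i j}, E i j → c i j = c (π i) (π j) ^ p) (hu : ∀ i j, u i j - u j i = c i j)
    (hcu : ∀ {i j}, c i j = 0 → u i j = 0) :
    (fun i j => if E i j then u i j - u (π i) (π j) ^ p else 0) ∈ symmetricSupportedIn c := by
  have hp : p ≠ 0 := (Fact.out : p.Prime).ne_zero
  refine ⟨fun i j => ?_, fun i j hij => ?_⟩ <;> by_cases h : E i j <;> beta_reduce
  · rw [if_pos h, if_pos (hE h), sub_eq_sub_iff_sub_eq_sub, hu, ← sub_pow_char, hu, hc h]
  · rw [if_neg h, if_neg fun h' => h (hE h')]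
  · rw [if_pos h, hcu hij, hcu ((pow_eq_zero_iff hp).mp (hc h ▸ hij)), zero_pow hp, sub_zero]
  · rw [if_neg h]

/-- In characteristic `2` one cannot take `θ = c / 2`. The upper triangular part `u` of `c`
satisfies `u - uᵀ = c`, and its failure to be compatible with `π` is symmetric, so Lang's theorem
for symmetric matrices corrects it. -/
theorem exists_sub_swap_eq [IsAlgClosed k] [Finite ι] [LinearOrder ι] {c : ι → ι → k}
    (hE : ∀ {i j}, E i j → E j i) (hc_diag : ∀ i, c i i = 0) (hc_swap : ∀ i j, c i j = -c j i)
    (hc : ∀ {i j}, E i j → c i j = c (π i) (π j) ^ p) :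
    ∃ θ : ι → ι → k, (∀ i j, θ i j - θ j i = c i j) ∧ (∀ {i j}, c i j = 0 → θ i j = 0) ∧
      ∀ {i j}, E i j → θ i j = θ (π i) (π j) ^ p := by
  set u : ι → ι → k := fun i j => if i < j then c i j else 0 with hu_def
  have hu : ∀ i j, u i j - u j i = c i j := fun i j => by
    rcases lt_trichotomy i j with h | rfl | h
    · simp [hu_def, h, h.not_gt]
    · simp [hc_diag]
    · simp [hu_def, h, h.not_gt, hc_swap i j]
  have hcu : ∀ {i j}, c i j = 0 → u i j = 0 := fun {i j} h => by simp [hu_def, h]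
  obtain ⟨s, hs, hsub⟩ := exists_sub_map_eq
    (mapsTo_frobeniusPullback_symmetricSupportedIn (p := p) (c := c) hE hc)
    (ite_sub_pow_mem_symmetricSupportedIn (c := c) (u := u) hE hc hu hcu)
  refine ⟨u - s, fun i j => ?_, fun {i j} h => ?_, fun {i j} h => ?_⟩
  · simp only [Pi.sub_apply]
    rw [hs.1 j i, sub_sub_sub_cancel_right, hu]
  · simp only [Pi.sub_apply, hcu h, hs.2 i j h, sub_zero]
  · have hsub_ij := congrFun₂ hsub i j
    simp only [Pi.sub_apply, frobeniusPullback_of_mem h, if_pos h] at hsub_ij ⊢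
    rw [sub_pow_char]
    linear_combination -hsub_ij

end SkewDecomposition

namespace PolarizedBT1Space

variable {p : ℕ} [Fact p.Prime] {k : Type} [Field k] [CharP k p] [PerfectRing k p] {g : ℕ}
variable {X : PolarizedBT1Space p k g} {l : ℕ} {v : ℕ → ℕ} {hv : IsFinalSequence l v}
variable {x : Fin (2 * l) → X.M}

namespace IsLift

variable (hx : IsLift hv x x)
include hx

theorem V_apply_eq_zero {i : Fin (2 * l)} (h : ¬ JumpsAt v i) : X.V (x i) = 0 := by
  rw [hx.apply_eq h, X.V_F]

theorem F_apply_perm_eq_zero {i : Fin (2 * l)} (h : JumpsAt v i) : X.F (x (hv.perm i)) = 0 := by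
  rw [← hx.V_apply h, X.F_V]

theorem B_eq_zero_of_not_jumpsAt {i j : Fin (2 * l)} (hi : ¬ JumpsAt v i) (hj : ¬ JumpsAt v j) :
    X.B (x i) (x j) = 0 := by
  rw [hx.apply_eq hi, X.hcompat, hx.V_apply_eq_zero hj, map_zero,
    zero_pow (Fact.out : p.Prime).ne_zero]

theorem B_perm_eq_zero_of_jumpsAt {i j : Fin (2 * l)} (hi : JumpsAt v i) (hj : JumpsAt v j) :
    X.B (x (hv.perm i)) (x (hv.perm j)) = 0 := by
  rw [← hx.V_apply hi, ← pow_eq_zero_iff (Fact.out : p.Prime).ne_zero, X.B_V_pow,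
    hx.F_apply_perm_eq_zero hj, map_zero]

theorem sum_smul {A : Fin (2 * l) → Fin (2 * l) → k}
    (hA : ∀ {i j : Fin (2 * l)}, (JumpsAt v i ↔ JumpsAt v j) →
      A i j = A (hv.perm i) (hv.perm j) ^ p)
    (hA_jump : ∀ {i j : Fin (2 * l)}, JumpsAt v i → ¬ JumpsAt v j →
      A (hv.perm i) (hv.perm j) = 0)
    (hA_not_jump : ∀ {i j : Fin (2 * l)}, ¬ JumpsAt v i → JumpsAt v j → A i j = 0) :
    IsLift hv (fun i => ∑ j, A i j • x j) (fun i => ∑ j, A i j • x j) where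
  V_apply {i} hi := by
    rw [map_sum, ← Equiv.sum_comp hv.perm fun j => A (hv.perm i) j • x j]
    refine Finset.sum_congr rfl fun j _ => ?_
    by_cases hj : JumpsAt v j
    · rw [map_smulₛₗ, hx.V_apply hj, hA (iff_of_true hi hj), RingHom.coe_coe,
        frobeniusEquiv_symm_pow]
    · rw [map_smulₛₗ, hx.V_apply_eq_zero hj, hA_jump hi hj, smul_zero, zero_smul]
  apply_eq {i} hi := by
    rw [map_sum, ← Equiv.sum_comp hv.perm fun j => X.F (A (hv.perm i) j • x j)]
    refine Finset.sum_congr rfl fun j _ => ?_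
    by_cases hj : JumpsAt v j
    · rw [map_smulₛₗ, hx.F_apply_perm_eq_zero hj, hA_not_jump hi hj, smul_zero, zero_smul]
    · rw [map_smulₛₗ, ← hx.apply_eq hj, hA (iff_of_false hi hj), frobenius_def]

end IsLift

end PolarizedBT1Space

namespace PolarizedBT1Space

variable {p : ℕ} [Fact p.Prime] {k : Type} [Field k] [CharP k p] [PerfectRing k p] {g : ℕ}
variable {X : PolarizedBT1Space p k g} {l : ℕ} {v : ℕ → ℕ} {hv : IsFinalSequence l v}
variable {x : Fin (2 * l) → X.M}

section OffGram

/-- The Gram matrix of `x` with its antidiagonal replaced by `0`. -/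
def offGram (x : Fin (2 * l) → X.M) (i j : Fin (2 * l)) : k :=
  if j = i.rev then 0 else X.B (x i) (x j)

theorem offGram_rev (x : Fin (2 * l) → X.M) (i : Fin (2 * l)) : offGram x i i.rev = 0 := if_pos rfl

theorem offGram_of_ne {i j : Fin (2 * l)} (h : j ≠ i.rev) : offGram x i j = X.B (x i) (x j) :=
  if_neg h

theorem offGram_eq_zero_of_B_eq_zero {i j : Fin (2 * l)} (h : X.B (x i) (x j) = 0) :
    offGram x i j = 0 :=
  ite_eq_left_iff.mpr fun _ => h

theorem offGram_swap (x : Fin (2 * l) → X.M) (i j : Fin (2 * l)) :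
    offGram x i j = -offGram x j i := by
  by_cases h : j = i.rev
  · rw [h, offGram_rev, offGram, if_pos (Fin.rev_rev i).symm, neg_zero]
  · rw [offGram_of_ne h, offGram_of_ne fun h' => h (by rw [h', Fin.rev_rev]), X.B_swap]

theorem IsLift.offGram_eq_pow (hx : IsLift hv x x) {i j : Fin (2 * l)}
    (hij : JumpsAt v i ↔ ¬ JumpsAt v j) :
    offGram x i j = offGram x (hv.perm i) (hv.perm j) ^ p := by
  by_cases h : j = i.rev
  · rw [h, hv.perm_rev, offGram_rev, offGram_rev, zero_pow (Fact.out : p.Prime).ne_zero]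
  · rw [offGram_of_ne h, hx.B_eq_pow hx hij, offGram_of_ne]
    rwa [← hv.perm_rev, hv.perm.injective.ne_iff]

end OffGram

/-- The combination of the vectors `x j` which pairs with the dual basis of `x` like the `i`-th row
of `θ`, provided that the Gram matrix of `x` is antidiagonal with antidiagonal `β`. -/
noncomputable def correction (β : Fin (2 * l) → k) (x : Fin (2 * l) → X.M)
    (θ : Fin (2 * l) → Fin (2 * l) → k) (i : Fin (2 * l)) : X.M :=
  ∑ j, (θ i j.rev / β j) • x j

variable {β : Fin (2 * l) → k} {θ : Fin (2 * l) → Fin (2 * l) → k} {K : ℕ}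

theorem IsLift.correction (hx : IsLift hv x x) (hβ : IsStandardAntidiagonal p hv β)
    (hθ_zero : ∀ {i j}, offGram x i j = 0 → θ i j = 0)
    (hθ : ∀ {i j : Fin (2 * l)}, (JumpsAt v i ↔ ¬ JumpsAt v j) →
      θ i j = θ (hv.perm i) (hv.perm j) ^ p) :
    IsLift hv (correction β x θ) (correction β x θ) := by
  refine hx.sum_smul (fun {i j} hij => ?_) (fun {i j} hi hj => ?_) fun {i j} hi hj => ?_
  · rw [hθ (by rwa [hv.jumpsAt_rev_iff, not_not]), hv.perm_rev, hβ.eq_pow j, div_pow]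
  · rw [← hv.perm_rev, hθ_zero (offGram_eq_zero_of_B_eq_zero
      (hx.B_perm_eq_zero_of_jumpsAt hi ((hv.jumpsAt_rev_iff j).mpr hj))), zero_div]
  · rw [hθ_zero (offGram_eq_zero_of_B_eq_zero (hx.B_eq_zero_of_not_jumpsAt hi
      ((hv.jumpsAt_rev_iff j).not.mpr (not_not.mpr hj)))), zero_div]

namespace IsStandardUpTo

theorem offGram_eq_zero (hx : IsStandardUpTo hv β K x) {i j : Fin (2 * l)}
    (hij : (i : ℕ) + j + 1 < 2 * l + K) :
    offGram x i j = 0 := by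
  by_cases h : j = i.rev
  · rw [h, offGram_rev]
  · exact offGram_eq_zero_of_B_eq_zero (hx.B_eq_zero h hij)

section Correction

variable (hx : IsStandardUpTo hv β K x) (hβ : ∀ i, β i ≠ 0) (hK : 1 ≤ K)
  (hθ : ∀ {i j}, offGram x i j = 0 → θ i j = 0)
include hx hβ hK hθ

theorem B_correction_left {i j : Fin (2 * l)} (hij : (i : ℕ) + j + 1 < 2 * l + (K + 1)) :
    X.B (correction β x θ i) (x j) = θ i j := by
  simp only [correction, map_sum, map_smul, LinearMap.sum_apply, LinearMap.smul_apply, smul_eq_mul]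
  rw [Finset.sum_eq_single_of_mem j.rev (Finset.mem_univ _) fun m _ hm => ?_]
  · have hB := hx.B_rev j.rev
    rw [Fin.rev_rev] at hB ⊢
    rw [hB, div_mul_cancel₀ _ (hβ _)]
  · by_cases him : (i : ℕ) + m.rev + 1 < 2 * l + K
    · rw [hθ (hx.offGram_eq_zero him), zero_div, zero_mul]
    · rw [Fin.val_rev] at him
      rw [hx.B_eq_zero (fun h => hm (by rw [h, Fin.rev_rev])) (by lia), mul_zero]

theorem B_correction_correction {i j : Fin (2 * l)}
    (hij : (i : ℕ) + j + 1 < 2 * l + (K + 1)) :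
    X.B (correction β x θ i) (correction β x θ j) = 0 := by
  rw [correction.eq_def β x θ j, map_sum]
  refine Finset.sum_eq_zero fun m _ => ?_
  rw [map_smul, smul_eq_mul]
  by_cases hjm : (j : ℕ) + m.rev + 1 < 2 * l + K
  · rw [hθ (hx.offGram_eq_zero hjm), zero_div, zero_mul]
  · rw [Fin.val_rev] at hjm
    rw [hx.B_correction_left hβ hK hθ (by lia), hθ (hx.offGram_eq_zero (i := i) (by lia)),
      mul_zero]

end Correction

theorem exists_succ [IsAlgClosed k] (hx : IsStandardUpTo hv β K x) (hK : 1 ≤ K)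
    (hβ : IsStandardAntidiagonal p hv β) :
    ∃ y : Fin (2 * l) → X.M, IsStandardUpTo hv β (K + 1) y := by
  obtain ⟨θ, hθ_sub, hθ_zero, hθ⟩ := exists_sub_swap_eq (p := p)
    (E := fun i j : Fin (2 * l) => JumpsAt v i ↔ ¬ JumpsAt v j) (c := offGram x)
    (fun h => by tauto) (fun i => offGram_eq_zero_of_B_eq_zero (X.halt (x i))) (offGram_swap x)
    hx.isLift.offGram_eq_pow
  have hB {i j : Fin (2 * l)} (hij : (i : ℕ) + j + 1 < 2 * l + (K + 1)) :
      X.B ((x - correction β x θ) i) ((x - correction β x θ) j) =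
        X.B (x i) (x j) - offGram x i j := by
    have hleft := hx.B_correction_left hβ.ne_zero hK hθ_zero hij
    have hright := hx.B_correction_left hβ.ne_zero hK hθ_zero (i := j) (j := i) (by lia)
    have hboth := hx.B_correction_correction hβ.ne_zero hK hθ_zero hij
    rw [X.B_swap] at hright
    simp only [Pi.sub_apply, map_sub, LinearMap.sub_apply, hleft, hboth]
    linear_combination hright - hθ_sub i j
  refine ⟨x - correction β x θ, hx.isLift.sub (hx.isLift.correction hβ hθ_zero hθ), fun i => ?_,
    fun {i j} hij hlt => ?_⟩
  · rw [hB (by rw [Fin.val_rev]; lia), offGram_rev, sub_zero, hx.B_rev]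
  · rw [hB hlt, offGram_of_ne hij, sub_self]

end IsStandardUpTo

/-- `x` is a standard basis for the final sequence `v`: `F` and `V` permute its vectors up to
replacing some of them by `0`, and its Gram matrix is antidiagonal with antidiagonal `β`. -/
structure IsStandard (hv : IsFinalSequence l v) (β : Fin (2 * l) → k) (x : Fin (2 * l) → X.M) :
    Prop where
  isLift : IsLift hv x x
  B_apply : ∀ i j, X.B (x i) (x j) = if j = i.rev then β i else 0

theorem StableFlag.exists_isStandard [IsAlgClosed k] (Γ : X.StableFlag g) {β : Fin (2 * g) → k}
    (hβ : IsStandardAntidiagonal p Γ.isFinalSequence β) :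
    ∃ x : Fin (2 * g) → X.M, IsStandard Γ.isFinalSequence β x := by
  have hupTo : ∀ K ≥ 1, ∃ x : Fin (2 * g) → X.M, IsStandardUpTo Γ.isFinalSequence β K x :=
    fun K hK => by
      induction K, hK using Nat.le_induction with
      | base => exact Γ.exists_isStandardUpTo_one hβ
      | succ K hK ih =>
        obtain ⟨x, hx⟩ := ih
        exact hx.exists_succ hK hβ
  obtain ⟨x, hx⟩ := hupTo (2 * g + 1) (by lia)
  refine ⟨x, hx.isLift, fun i j => ?_⟩
  split_ifs with hij
  · rw [hij, hx.B_rev]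
  · exact hx.B_eq_zero hij (by lia)

namespace IsStandard

variable {hv : IsFinalSequence g v} {x : Fin (2 * g) → X.M} {β : Fin (2 * g) → k}

theorem linearIndependent (hx : IsStandard hv β x) (hβ : ∀ i, β i ≠ 0) :
    LinearIndependent k x := by
  refine Fintype.linearIndependent_iff.mpr fun c hc i => ?_
  have hB : X.B (∑ j, c j • x j) (x i.rev) = c i * β i := by
    simp [hx.B_apply, Fin.rev_inj]
  rw [hc, map_zero, LinearMap.zero_apply, eq_comm] at hB
  exact (mul_eq_zero.mp hB).resolve_right (hβ i)

/-- A standard family, as a basis. -/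
noncomputable def basis (hx : IsStandard hv β x) (hβ : ∀ i, β i ≠ 0) : Basis (Fin (2 * g)) k X.M :=
  basisOfLinearIndependentOfCardEqFinrank' x (hx.linearIndependent hβ) (by simp [X.hdim])

@[simp]
theorem coe_basis (hx : IsStandard hv β x) (hβ : ∀ i, β i ≠ 0) : ⇑(hx.basis hβ) = x :=
  coe_basisOfLinearIndependentOfCardEqFinrank' ..

theorem iso {Y : PolarizedBT1Space p k g} {y : Fin (2 * g) → Y.M} (hx : IsStandard hv β x)
    (hy : IsStandard hv β y) (hβ : ∀ i, β i ≠ 0) : X.Iso Y := by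
  let α : X.M ≃ₗ[k] Y.M := (hx.basis hβ).equiv (hy.basis hβ) (Equiv.refl _)
  have hα (i : Fin (2 * g)) : α (x i) = y i := by
    simpa using (hx.basis hβ).equiv_apply i (hy.basis hβ) (Equiv.refl _)
  have hF : α.toLinearMap.comp X.F = Y.F.comp α.toLinearMap := (hx.basis hβ).ext fun i => by
    obtain ⟨i, rfl⟩ := hv.perm.surjective i
    simp only [coe_basis, LinearMap.comp_apply, LinearEquiv.coe_coe, hα]
    by_cases hi : JumpsAt v i
    · rw [hx.isLift.F_apply_perm_eq_zero hi, hy.isLift.F_apply_perm_eq_zero hi, map_zero]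
    · rw [← hx.isLift.apply_eq hi, ← hy.isLift.apply_eq hi, hα]
  have hV : α.toLinearMap.comp X.V = Y.V.comp α.toLinearMap := (hx.basis hβ).ext fun i => by
    simp only [coe_basis, LinearMap.comp_apply, LinearEquiv.coe_coe, hα]
    by_cases hi : JumpsAt v i
    · rw [hx.isLift.V_apply hi, hy.isLift.V_apply hi, hα]
    · rw [hx.isLift.V_apply_eq_zero hi, hy.isLift.V_apply_eq_zero hi, map_zero]
  have hB : Y.B.compl₁₂ α.toLinearMap α.toLinearMap = X.B :=
    LinearMap.ext_basis (hx.basis hβ) (hx.basis hβ) fun i j => by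
      simp only [coe_basis, LinearMap.compl₁₂_apply, LinearEquiv.coe_coe, hα, hx.B_apply,
        hy.B_apply]
  exact ⟨α, LinearMap.congr_fun hF, LinearMap.congr_fun hV, LinearMap.congr_fun₂ hB⟩

end IsStandard

end PolarizedBT1Space

/-! ### Uniqueness of the final sequence -/

namespace PolarizedBT1Space

variable {p : ℕ} [Fact p.Prime] {k : Type} [Field k] [CharP k p] [PerfectRing k p] {g : ℕ}
variable {X Y : PolarizedBT1Space p k g} {l : ℕ}

namespace StableFlag

theorem exists_finrank_le_and_lt (Δ : X.StableFlag l) {i : ℕ} (hi : i < 2 * g) :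
    ∃ b : Fin (2 * l), finrank k (Δ.W b) ≤ i ∧ i < finrank k (Δ.W (b + 1)) := by
  by_contra! hle
  have hrank : ∀ j ≤ 2 * l, finrank k (Δ.W j) ≤ i := fun j => by
    induction j with
    | zero => exact fun _ => Δ.finrank_W_zero.le.trans i.zero_le
    | succ j ih => exact fun hj => hle ⟨j, hj⟩ (ih (by lia))
  exact hi.not_ge (Δ.finrank_W_two_mul ▸ hrank (2 * l) le_rfl)

theorem finrank_map_V (Γ : X.StableFlag g) (i : ℕ) : finrank k ((Γ.W i).map X.V) = Γ.v i := by
  rw [Γ.map_V, Γ.finrank_W ((Γ.isFinalSequence.le_half i).trans (by lia))]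

theorem finrank_comap_F (Γ : X.StableFlag g) {i : ℕ} (hi : i ≤ 2 * g) :
    finrank k ((Γ.W i).comap X.F) = g + i - Γ.v i := by
  have := Γ.isFinalSequence.le_half_add hi
  rw [Γ.comap_F, Γ.finrank_W (by lia)]

theorem W_finrank (Γ : X.StableFlag g) {A : Submodule k X.M} (hA : A ∈ Set.range Γ.W) :
    Γ.W (finrank k A) = A := by
  obtain ⟨i, rfl⟩ := hA
  rcases le_total i (2 * g) with hi | hi
  · rw [Γ.finrank_W hi]
  · rw [Γ.W_of_le i hi, finrank_top, X.hdim, Γ.W_of_le _ le_rfl]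

theorem v_eq_of_range_subset (Γ : X.StableFlag g) (Δ : X.StableFlag l)
    (hΔΓ : Set.range Δ.W ⊆ Set.range Γ.W) {b : Fin (2 * l)} {i : ℕ}
    (hbi : finrank k (Δ.W b) ≤ i) (hib : i ≤ finrank k (Δ.W (b + 1))) :
    Γ.v i = finrank k ((Δ.W b).map X.V) +
      if JumpsAt Δ.v b then i - finrank k (Δ.W b) else 0 := by
  have hW (j : ℕ) : Γ.W (finrank k (Δ.W j)) = Δ.W j := Γ.W_finrank (hΔΓ ⟨j, rfl⟩)
  have hd (j : ℕ) : finrank k (Δ.W j) ≤ 2 * g := X.hdim ▸ Submodule.finrank_le _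
  have hv (j : ℕ) : finrank k ((Δ.W j).map X.V) = Γ.v (finrank k (Δ.W j)) := by
    rw [← Γ.finrank_map_V, hW]
  split_ifs with hb
  · have hF : finrank k ((Γ.W (finrank k (Δ.W (b + 1)))).comap X.F) =
        finrank k ((Γ.W (finrank k (Δ.W b))).comap X.F) := by
      rw [hW, hW, comap_F_succ_of_jumpsAt hb]
    rw [Γ.finrank_comap_F (hd _), Γ.finrank_comap_F (hd _)] at hF
    have h₁ := Γ.isFinalSequence.add_le_add_of_le hbi
    have h₂ := Γ.isFinalSequence.add_le_add_of_le hib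
    have h₃ := Γ.isFinalSequence.le_half (finrank k (Δ.W b))
    have h₄ := Γ.isFinalSequence.le_half (finrank k (Δ.W (b + 1)))
    rw [hv]
    lia
  · have hV := congrArg (fun A : Submodule k X.M => finrank k A) (map_V_succ_of_not_jumpsAt hb)
    beta_reduce at hV
    rw [hv, hv] at hV
    rw [hv, add_zero]
    exact ((Γ.isFinalSequence.monotone hib).trans hV.le).antisymm (Γ.isFinalSequence.monotone hbi)

theorem v_eq (Γ Γ' : X.StableFlag g) : Γ.v = Γ'.v := by
  obtain ⟨l, Δ, hΔ⟩ := X.isStableChain_isCanonical.exists_stableFlag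
  have hsubset (Γ : X.StableFlag g) : Set.range Δ.W ⊆ Set.range Γ.W := hΔ ▸ fun _ hA =>
    Γ.isStableChain_range.mem_of_isCanonical hA
  funext i
  rcases le_or_gt (2 * g) i with hi | hi
  · rw [Γ.isFinalSequence.eq_of_le i hi, Γ'.isFinalSequence.eq_of_le i hi]
  · obtain ⟨b, hbi, hib⟩ := Δ.exists_finrank_le_and_lt hi
    rw [Γ.v_eq_of_range_subset Δ (hsubset Γ) hbi hib.le,
      Γ'.v_eq_of_range_subset Δ (hsubset Γ') hbi hib.le]

end StableFlag

theorem Iso.exists_stableFlag (hXY : X.Iso Y) (Γ : Y.StableFlag l) :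
    ∃ Δ : X.StableFlag l, Δ.v = Γ.v := by
  obtain ⟨α, hF, hV, hB⟩ := hXY
  have hcomap_lt {A D : Submodule k Y.M} (h : A < D) :
      A.comap α.toLinearMap < D.comap α.toLinearMap :=
    (Submodule.orderIsoMapComap α).symm.strictMono h
  have hmap_V (A : Submodule k Y.M) :
      (A.comap α.toLinearMap).map X.V = (A.map Y.V).comap α.toLinearMap := by
    ext x
    simp only [Submodule.mem_map, Submodule.mem_comap, LinearEquiv.coe_coe]
    refine ⟨fun ⟨y, hy, hyx⟩ => ⟨α y, hy, by rw [← hV, hyx]⟩, fun ⟨z, hz, hzx⟩ =>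
      ⟨α.symm z, by rwa [α.apply_symm_apply], α.injective (by rw [hV, α.apply_symm_apply, hzx])⟩⟩
  have horth (A : Submodule k Y.M) :
      X.orth (A.comap α.toLinearMap) = (Y.orth A).comap α.toLinearMap := by
    ext x
    simp only [mem_orth, Submodule.mem_comap, LinearEquiv.coe_coe]
    refine ⟨fun h z hz => ?_, fun h z hz => by rw [← hB, h _ hz]⟩
    rw [← α.apply_symm_apply z, hB, h _ (by rwa [α.apply_symm_apply])]
  exact ⟨{
    W i := (Γ.W i).comap α.toLinearMap
    v := Γ.v
    strictMonoOn _ hi _ hj hij := hcomap_lt (Γ.strictMonoOn hi hj hij)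
    W_zero := by rw [Γ.W_zero, Submodule.comap_bot, LinearEquiv.ker]
    W_of_le i hi := by rw [Γ.W_of_le i hi, Submodule.comap_top]
    isFinalSequence := Γ.isFinalSequence
    map_V i := by rw [hmap_V, Γ.map_V]
    comap_F i := by
      rw [← Γ.comap_F]
      ext x
      simp [hF]
    orth i := by rw [horth, Γ.orth] }, rfl⟩

end PolarizedBT1Space

/-! ### The standard model -/

namespace PolarizedBT1Space

section Model

variable {p : ℕ} [Fact p.Prime] {k : Type} [Field k] [CharP k p] {g : ℕ}
variable {v : ℕ → ℕ} (hv : IsFinalSequence g v)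

/-- The Frobenius of `model`. -/
noncomputable def modelF : (Fin (2 * g) → k) →ₛₗ[frobenius k p] (Fin (2 * g) → k) where
  toFun x i := if JumpsAt v i then 0 else x (hv.perm i) ^ p
  map_add' x y := by
    funext i
    by_cases hi : JumpsAt v i <;> simp [hi, add_pow_char]
  map_smul' a x := by
    funext i
    by_cases hi : JumpsAt v i <;> simp [hi, mul_pow, frobenius_def]

/-- The Verschiebung of `model`. -/
noncomputable def modelV [PerfectRing k p] :
    (Fin (2 * g) → k) →ₛₗ[((frobeniusEquiv k p).symm : k →+* k)] (Fin (2 * g) → k) where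
  toFun x j :=
    if JumpsAt v (hv.perm.symm j) then (frobeniusEquiv k p).symm (x (hv.perm.symm j)) else 0
  map_add' x y := by
    funext j
    by_cases hj : JumpsAt v (hv.perm.symm j) <;> simp [hj]
  map_smul' a x := by
    funext j
    by_cases hj : JumpsAt v (hv.perm.symm j) <;> simp [hj]

/-- The bilinear form on `model`, with Gram matrix antidiagonal. -/
def modelB {n : ℕ} (β : Fin n → k) : (Fin n → k) →ₗ[k] (Fin n → k) →ₗ[k] k :=
  ∑ i, β i • (LinearMap.proj i).smulRight (LinearMap.proj i.rev)

/-- The `i`-th step of the standard flag: the span of the first `i` coordinate vectors. -/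
def modelFlag (k : Type) [Field k] (n i : ℕ) : Submodule k (Fin n → k) :=
  Submodule.pi {j | i ≤ (j : ℕ)} fun _ => ⊥

variable {hv} (x : Fin (2 * g) → k) {i : Fin (2 * g)}

theorem modelF_of_jumpsAt (hi : JumpsAt v i) : modelF (p := p) hv x i = 0 := if_pos hi

theorem modelF_of_not_jumpsAt (hi : ¬ JumpsAt v i) : modelF hv x i = x (hv.perm i) ^ p :=
  if_neg hi

theorem modelV_perm_of_jumpsAt [PerfectRing k p] (hi : JumpsAt v i) :
    modelV (p := p) hv x (hv.perm i) = (frobeniusEquiv k p).symm (x i) := by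
  simp [modelV, hi]

theorem modelV_perm_of_not_jumpsAt [PerfectRing k p] (hi : ¬ JumpsAt v i) :
    modelV (p := p) hv x (hv.perm i) = 0 := by
  simp [modelV, hi]

theorem modelB_apply {n : ℕ} (β x y : Fin n → k) :
    modelB β x y = ∑ i, β i * (x i * y i.rev) := by
  simp [modelB]

theorem modelB_single_left {n : ℕ} (β y : Fin n → k) (i : Fin n) :
    modelB β (Pi.single i 1) y = β i * y i.rev := by
  simp [modelB_apply, Pi.single_apply]

theorem modelB_single_right {n : ℕ} (β x : Fin n → k) (i : Fin n) :
    modelB β x (Pi.single i.rev 1) = β i * x i := by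
  simp [modelB_apply, Pi.single_apply]

theorem mem_modelFlag {n i : ℕ} {x : Fin n → k} :
    x ∈ modelFlag k n i ↔ ∀ j : Fin n, i ≤ (j : ℕ) → x j = 0 := by
  simp [modelFlag]

theorem single_mem_modelFlag {n i : ℕ} {j : Fin n} :
    Pi.single j 1 ∈ modelFlag k n i ↔ (j : ℕ) < i := by
  rw [mem_modelFlag, ← not_le]
  refine ⟨fun h hij => one_ne_zero ((Pi.single_eq_same j 1).symm.trans (h j hij)),
    fun h m hm => Pi.single_eq_of_ne ?_ 1⟩
  rintro rfl
  exact h hm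

theorem strictMonoOn_modelFlag (k : Type) [Field k] (n : ℕ) :
    StrictMonoOn (modelFlag k n) (Set.Iic n) := by
  intro i _ j hj hij
  refine SetLike.lt_iff_le_and_exists.mpr ⟨fun x hx => mem_modelFlag.mpr fun m hm =>
    mem_modelFlag.mp hx m (hij.le.trans hm), Pi.single ⟨i, hij.trans_le hj⟩ 1,
    single_mem_modelFlag.mpr hij, fun h => lt_irrefl i (single_mem_modelFlag.mp h)⟩

theorem ker_modelF [PerfectRing k p] :
    LinearMap.ker (modelF (p := p) (k := k) hv) = LinearMap.range (modelV hv) := by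
  have hp : p ≠ 0 := (Fact.out : p.Prime).ne_zero
  ext y
  refine ⟨fun hy => ⟨fun i => y (hv.perm i) ^ p,
    funext (hv.perm.surjective.forall.mpr fun i => ?_)⟩, ?_⟩
  · by_cases hi : JumpsAt v i
    · rw [modelV_perm_of_jumpsAt _ hi, frobeniusEquiv_symm_pow]
    · have hyi := congrFun hy i
      rw [modelF_of_not_jumpsAt _ hi] at hyi
      rw [modelV_perm_of_not_jumpsAt _ hi, (pow_eq_zero_iff hp).mp hyi]
  · rintro ⟨x, rfl⟩
    funext i
    by_cases hi : JumpsAt v i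
    · exact modelF_of_jumpsAt _ hi
    · rw [modelF_of_not_jumpsAt _ hi, modelV_perm_of_not_jumpsAt _ hi, zero_pow hp, Pi.zero_apply]

theorem ker_modelV [PerfectRing k p] :
    LinearMap.ker (modelV (p := p) (k := k) hv) = LinearMap.range (modelF hv) := by
  ext y
  refine ⟨fun hy => ⟨fun j => (frobeniusEquiv k p).symm (y (hv.perm.symm j)), funext fun i => ?_⟩,
    ?_⟩
  · by_cases hi : JumpsAt v i
    · have hyi := congrFun hy (hv.perm i)
      rw [modelV_perm_of_jumpsAt _ hi, Pi.zero_apply, map_eq_zero_iff _ (RingEquiv.injective _)]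
        at hyi
      rw [modelF_of_jumpsAt _ hi, hyi]
    · rw [modelF_of_not_jumpsAt _ hi, frobeniusEquiv_symm_pow_p, Equiv.symm_apply_apply]
  · rintro ⟨x, rfl⟩
    refine funext (hv.perm.surjective.forall.mpr fun i => ?_)
    by_cases hi : JumpsAt v i
    · rw [modelV_perm_of_jumpsAt _ hi, modelF_of_jumpsAt _ hi, map_zero, Pi.zero_apply]
    · exact modelV_perm_of_not_jumpsAt _ hi

theorem map_modelV_modelFlag [PerfectRing k p] (n : ℕ) :
    (modelFlag k (2 * g) n).map (modelV (p := p) hv) = modelFlag k (2 * g) (v n) := by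
  ext y
  simp only [Submodule.mem_map, mem_modelFlag,
    hv.perm.surjective.forall (p := fun j => _ → y j = 0)]
  refine ⟨?_, fun hy => ⟨fun i => if JumpsAt v i then y (hv.perm i) ^ p else 0, fun i hi => ?_,
    funext (hv.perm.surjective.forall.mpr fun i => ?_)⟩⟩
  · rintro ⟨x, hx, rfl⟩ i hi
    by_cases hjump : JumpsAt v i
    · rw [← not_lt, hv.perm_lt_apply_iff hjump, not_lt] at hi
      rw [modelV_perm_of_jumpsAt _ hjump, hx i hi, map_zero]
    · exact modelV_perm_of_not_jumpsAt _ hjump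
  · beta_reduce
    split_ifs with hjump
    · rw [← not_lt, ← hv.perm_lt_apply_iff hjump, not_lt] at hi
      rw [hy i hi, zero_pow (Fact.out : p.Prime).ne_zero]
    · rfl
  · by_cases hjump : JumpsAt v i
    · rw [modelV_perm_of_jumpsAt _ hjump, if_pos hjump, frobeniusEquiv_symm_pow]
    · have := (hv.perm_lt_half_iff i).not.mpr hjump
      rw [modelV_perm_of_not_jumpsAt _ hjump, hy i ((hv.le_half n).trans (not_lt.mp this))]

theorem comap_modelF_modelFlag (n : ℕ) :
    (modelFlag k (2 * g) n).comap (modelF (p := p) hv) = modelFlag k (2 * g) (g + n - v n) := by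
  have hp : p ≠ 0 := (Fact.out : p.Prime).ne_zero
  ext x
  simp only [Submodule.mem_comap, mem_modelFlag,
    hv.perm.surjective.forall (p := fun j => _ → x j = 0)]
  refine forall_congr' fun i => ?_
  by_cases hi : JumpsAt v i
  · have h₁ := (hv.perm_lt_half_iff i).mpr hi
    have h₂ := hv.le_self n
    exact iff_of_true (fun _ => modelF_of_jumpsAt x hi) (fun h => by lia)
  · rw [modelF_of_not_jumpsAt x hi, pow_eq_zero_iff hp, ← not_lt, ← not_lt,
      hv.perm_lt_sub_apply_iff hi]

theorem forall_modelB_eq_zero_iff {n : ℕ} {β : Fin n → k} (hβ : ∀ i, β i ≠ 0) {m : ℕ}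
    {y : Fin n → k} :
    (∀ x ∈ modelFlag k n m, modelB β x y = 0) ↔ y ∈ modelFlag k n (n - m) := by
  rw [mem_modelFlag]
  refine ⟨fun h j hj => ?_, fun h x hx => ?_⟩
  · have hB := h (Pi.single j.rev 1) (single_mem_modelFlag.mpr (by rw [Fin.val_rev]; lia))
    rw [modelB_single_left, Fin.rev_rev] at hB
    exact (mul_eq_zero.mp hB).resolve_left (hβ _)
  · rw [modelB_apply]
    refine Finset.sum_eq_zero fun j _ => ?_
    rcases le_or_gt m j with hj | hj
    · rw [mem_modelFlag.mp hx j hj, zero_mul, mul_zero]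
    · rw [h j.rev (by rw [Fin.val_rev]; lia), mul_zero, mul_zero]

theorem modelB_self {β : Fin (2 * g) → k} (hβ : ∀ i, β i.rev = -β i) (x : Fin (2 * g) → k) :
    modelB β x x = 0 := by
  rw [modelB_apply]
  refine Finset.sum_ninvolution Fin.rev (fun i => ?_) (fun i _ h => ?_)
    (fun _ => Finset.mem_univ _) Fin.rev_rev
  · rw [hβ, Fin.rev_rev]
    ring
  · have := congrArg Fin.val h
    rw [Fin.val_rev] at this
    lia

theorem modelB_modelF_left [PerfectRing k p] {β : Fin (2 * g) → k}
    (hβ : ∀ i, β i = β (hv.perm i) ^ p) (x y : Fin (2 * g) → k) :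
    modelB β (modelF hv x) y = modelB β x (modelV hv y) ^ p := by
  rw [modelB_apply, modelB_apply, sum_pow_char,
    ← Equiv.sum_comp hv.perm fun i => (β i * (x i * modelV hv y i.rev)) ^ p]
  refine Finset.sum_congr rfl fun i _ => ?_
  rw [← hv.perm_rev, mul_pow, mul_pow, ← hβ]
  by_cases hi : JumpsAt v i
  · rw [modelF_of_jumpsAt _ hi,
      modelV_perm_of_not_jumpsAt _ ((hv.jumpsAt_rev_iff i).not.mpr (not_not.mpr hi)),
      zero_pow (Fact.out : p.Prime).ne_zero, zero_mul, mul_zero, mul_zero,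
      mul_zero]
  · rw [modelF_of_not_jumpsAt _ hi, modelV_perm_of_jumpsAt _ ((hv.jumpsAt_rev_iff i).mpr hi),
      frobeniusEquiv_symm_pow_p]

variable [PerfectRing k p] {β : Fin (2 * g) → k} (hβ : IsStandardAntidiagonal p hv β)

/-- The quadruple whose coordinate vectors form a standard basis with final sequence `v` and
antidiagonal `β`. -/
noncomputable def model : PolarizedBT1Space p k g where
  M := Fin (2 * g) → k
  hdim := finrank_fin_fun k
  F := modelF hv
  V := modelV hv
  hFV := ker_modelF
  hVF := ker_modelV
  B := modelB β
  halt := modelB_self hβ.rev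
  hnondeg x hx := funext fun i => by
    have hB := hx (Pi.single i.rev 1)
    rw [modelB_single_right] at hB
    exact (mul_eq_zero.mp hB).resolve_left (hβ.ne_zero i)
  hcompat := modelB_modelF_left hβ.eq_pow

/-- The flag spanned by the coordinate vectors of `model`. -/
noncomputable def modelStableFlag : (model hβ).StableFlag g where
  W := modelFlag k (2 * g)
  v := v
  strictMonoOn := strictMonoOn_modelFlag k (2 * g)
  W_zero := eq_bot_iff.mpr fun _ hx => funext fun j => mem_modelFlag.mp hx j j.1.zero_le
  W_of_le _ hi := eq_top_iff.mpr fun _ _ => mem_modelFlag.mpr fun j hj =>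
    absurd (hi.trans hj) j.2.not_ge
  isFinalSequence := hv
  map_V := map_modelV_modelFlag
  comap_F := comap_modelF_modelFlag
  orth _ := Submodule.ext fun _ => (mem_orth _).trans (forall_modelB_eq_zero_iff hβ.ne_zero)

end Model

end PolarizedBT1Space

/-! ### Ekedahl–Oort types -/

namespace PolarizedBT1Space

variable {p : ℕ} [Fact p.Prime] {k : Type} [Field k] [CharP k p] [PerfectRing k p]
  [IsAlgClosed k] {g : ℕ} {X Y : PolarizedBT1Space p k g}

/-- The Ekedahl–Oort type of `X`, encoded as the set of jumps below `g` of the final sequence of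
any full stable flag of `X`. -/
def ekedahlOortType (X : PolarizedBT1Space p k g) : Set (Fin g) :=
  {i | JumpsAt X.nonempty_stableFlag.some.v i}

theorem ekedahlOortType_eq_setOf (Γ : X.StableFlag g) :
    X.ekedahlOortType = {i : Fin g | JumpsAt Γ.v i} := by
  rw [ekedahlOortType, StableFlag.v_eq _ Γ]

theorem Iso.ekedahlOortType_eq (h : X.Iso Y) : X.ekedahlOortType = Y.ekedahlOortType := by
  obtain ⟨Γ⟩ := Y.nonempty_stableFlag
  obtain ⟨Δ, hΔ⟩ := h.exists_stableFlag Γ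
  rw [ekedahlOortType_eq_setOf Δ, ekedahlOortType_eq_setOf Γ, hΔ]

theorem iso_of_ekedahlOortType_eq (h : X.ekedahlOortType = Y.ekedahlOortType) : X.Iso Y := by
  obtain ⟨Γ⟩ := X.nonempty_stableFlag
  obtain ⟨Δ⟩ := Y.nonempty_stableFlag
  have hv : Γ.v = Δ.v := Γ.isFinalSequence.ext_jumpsAt Δ.isFinalSequence fun i hi => by
    rw [ekedahlOortType_eq_setOf Γ, ekedahlOortType_eq_setOf Δ] at h
    exact Set.ext_iff.mp h ⟨i, hi⟩
  obtain ⟨β, hβ⟩ := exists_isStandardAntidiagonal p k Γ.isFinalSequence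
  obtain ⟨x, hx⟩ := Γ.exists_isStandard hβ
  obtain ⟨y, hy⟩ : ∃ y : Fin (2 * g) → Y.M, IsStandard Γ.isFinalSequence β y := by
    simp only [hv] at hβ ⊢
    exact Δ.exists_isStandard hβ
  exact hx.iso hy hβ.ne_zero

variable (p k) in
theorem exists_ekedahlOortType_eq (s : Set (Fin g)) :
    ∃ X : PolarizedBT1Space p k g, X.ekedahlOortType = s := by
  obtain ⟨v, hv, hvs⟩ := IsFinalSequence.exists_jumpsAt_iff_mem (Fin.val '' s) g
  obtain ⟨β, hβ⟩ := exists_isStandardAntidiagonal p k hv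
  refine ⟨model hβ, (ekedahlOortType_eq_setOf (modelStableFlag hβ)).trans (Set.ext fun i => ?_)⟩
  exact (hvs i i.2).trans Fin.val_injective.mem_set_image

end PolarizedBT1Space

/-- Let `k` be an algebraically closed field of characteristic `p` and fix `g ≥ 1`.  The
number of isomorphism classes of quadruples `(M, F, V, ⟨·,·⟩)` with `dim_k M = 2g` is
exactly `2 ^ g`. -/
theorem card_isoClasses_polarizedBT1 (p : ℕ) [Fact p.Prime] (k : Type) [Field k] [CharP k p]
    [PerfectRing k p] [IsAlgClosed k] (g : ℕ) (hg : 1 ≤ g) :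
    Nat.card (Quot (PolarizedBT1Space.Iso (p := p) (k := k) (g := g))) = 2 ^ g := by
  let type : Quot (PolarizedBT1Space.Iso (p := p) (k := k) (g := g)) → Set (Fin g) :=
    Quot.lift PolarizedBT1Space.ekedahlOortType fun _ _ h => h.ekedahlOortType_eq
  have type_injective : type.Injective := by
    rintro ⟨X⟩ ⟨Y⟩ h
    exact Quot.sound (PolarizedBT1Space.iso_of_ekedahlOortType_eq h)
  have type_surjective : type.Surjective := fun s =>
    let ⟨X, hX⟩ := PolarizedBT1Space.exists_ekedahlOortType_eq p k s
    ⟨Quot.mk _ X, hX⟩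
  rw [Nat.card_eq_of_bijective type ⟨type_injective, type_surjective⟩, Nat.card_eq_fintype_card,
    Fintype.card_set, Fintype.card_fin]
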